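/- arXiv:math/9902122 — 7 statements merged into one kernel-verified Lean document; each statement's English description precedes it below -/
import Mathlib

section
/- Let r ≥ 2 be an integer and let λ = exp(2πi/(2r)) ∈ ℂ. For every integer n with 1 ≤ n ≤ r − 1, the quantum integer [n] = (λ^n − λ^{−n})/(λ − λ^{−1}) lies in A_r and is a unit of A_r, i.e. both [n] and [n]⁻¹ belong to A_r. (Lemma 2 of the paper.) -/
open Complex Real

/-!
If `z ^ m = 1` and `z ≠ 1` in a domain, then `1 + z + ⋯ + z ^ (m - 1) = 0`.
Reducing this sum modulo `z - 1` shows that `z - 1` divides `m`, so it is a unit as soon as `m` is.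
With `z = q ^ (2 * n)` this makes `q ^ n - q ^ (-n) = q ^ (-n) * (q ^ (2 * n) - 1)` a unit,
and `[n]` is a quotient of two such elements.
-/

theorem isUnit_zpow_sub_zpow_neg {A : Type*} [CommRing A] [IsDomain A] {q : Aˣ} {m : ℕ}
    (hm : IsUnit (m : A)) (hq : q ^ m = 1) {n : ℤ} (hn : q ^ (2 * n) ≠ 1) :
    IsUnit (((q ^ n : Aˣ) : A) - ((q ^ (-n) : Aˣ) : A)) := by
  have pow_eq_one : ((q ^ (2 * n) : Aˣ) : A) ^ m = 1 := by
    rw [← Units.val_pow_eq_pow_val, ← zpow_natCast, zpow_comm, zpow_natCast, hq, one_zpow,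
      Units.val_one]
  have isUnit_sub_one : IsUnit (((q ^ (2 * n) : Aˣ) : A) - 1) :=
    isUnit_of_dvd_unit
      (sub_one_dvd_natCast_of_pow_eq_one pow_eq_one (Units.val_eq_one.not.mpr hn)) hm
  have factorization : ((q ^ n : Aˣ) : A) - ((q ^ (-n) : Aˣ) : A) =
      ((q ^ (-n) : Aˣ) : A) * (((q ^ (2 * n) : Aˣ) : A) - 1) := by
    rw [mul_sub, mul_one, ← Units.val_mul, ← zpow_add, two_mul, neg_add_cancel_left]
  exact factorization ▸ (q ^ (-n)).isUnit.mul isUnit_sub_one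

section Field

variable {K : Type*} [Field K]

/-- The quantum integer `[n]` at the parameter `q`, with the junk value `0` when `q = q⁻¹`. -/
def quantumInt (q : K) (n : ℤ) : K :=
  (q ^ n - q ^ (-n)) / (q - q⁻¹)

theorem coe_div_coe_mem_of_isUnit {S : Subring K} (a : S) {b : S} (hb : IsUnit b) :
    (a / b : K) ∈ S := by
  obtain ⟨c, hbc⟩ := hb.exists_right_inv
  have inv_eq : (b : K)⁻¹ = c := inv_eq_of_mul_eq_one_right (congrArg Subtype.val hbc)
  rw [div_eq_mul_inv, inv_eq]
  exact (a * c).2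

theorem exists_isUnit_coe_eq_zpow_sub_zpow_neg {S : Subring K} {q : K} {m : ℕ} (hqS : q ∈ S)
    (hmS : (m : K)⁻¹ ∈ S) (hm : (m : K) ≠ 0) (hq : q ^ m = 1) {n : ℤ} (hn : q ^ (2 * n) ≠ 1) :
    ∃ a : S, IsUnit a ∧ (a : K) = q ^ n - q ^ (-n) := by
  have hm0 : m ≠ 0 := by rintro rfl; exact hm Nat.cast_zero
  have isUnit_m : IsUnit (m : S) :=
    .of_mul_eq_one ⟨(m : K)⁻¹, hmS⟩ (Subtype.ext (by simp [hm]))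
  let u : Sˣ := Units.ofPowEqOne ⟨q, hqS⟩ m (Subtype.ext hq) hm0
  have coe_zpow (k : ℤ) : (((u ^ k : Sˣ) : S) : K) = q ^ k := by
    calc (((u ^ k : Sˣ) : S) : K) = ((Units.map (S.subtype : S →* K) u ^ k : Kˣ) : K) :=
          congrArg Units.val (map_zpow (Units.map (S.subtype : S →* K)) u k)
      _ = q ^ k := Units.val_zpow_eq_zpow_val _ k
  have zpow_ne_one : u ^ (2 * n) ≠ 1 := fun h => hn (by rw [← coe_zpow, h]; rfl)
  refine ⟨_, isUnit_zpow_sub_zpow_neg isUnit_m (Units.pow_ofPowEqOne _ hm0) zpow_ne_one, ?_⟩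
  rw [AddSubgroupClass.coe_sub, coe_zpow, coe_zpow]

theorem stmt_1_general {q : K} {m : ℕ} (hm : (m : K) ≠ 0) (hq : q ^ m = 1) {n : ℤ}
    (hn : q ^ (2 * n) ≠ 1) :
    quantumInt q n ∈ Subring.closure {q, (m : K)⁻¹} ∧
      (quantumInt q n)⁻¹ ∈ Subring.closure {q, (m : K)⁻¹} := by
  have hqS : q ∈ Subring.closure {q, (m : K)⁻¹} := Subring.subset_closure (by simp)
  have hmS : (m : K)⁻¹ ∈ Subring.closure {q, (m : K)⁻¹} := Subring.subset_closure (by simp)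
  have hq2 : q ^ (2 * 1 : ℤ) ≠ 1 := fun h => hn (by rw [zpow_mul, ← mul_one 2, h, one_zpow])
  obtain ⟨a, isUnit_a, ha⟩ := exists_isUnit_coe_eq_zpow_sub_zpow_neg hqS hmS hm hq hn
  obtain ⟨b, isUnit_b, hb⟩ := exists_isUnit_coe_eq_zpow_sub_zpow_neg hqS hmS hm hq hq2
  have quantumInt_eq : quantumInt q n = a / b := by rw [quantumInt, ha, hb, zpow_one, zpow_neg_one]
  rw [quantumInt_eq, inv_div]
  exact ⟨coe_div_coe_mem_of_isUnit a isUnit_b, coe_div_coe_mem_of_isUnit b isUnit_a⟩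

end Field

/-- Lemma 2: for `λ = exp(2πi/(2r))` and `1 ≤ n ≤ r - 1`, the quantum integer
`[n] = (λ^n - λ^{-n})/(λ - λ^{-1})` lies in `A_r = ℤ[1/(2r)][λ]` and is a unit
of that ring (its inverse also lies in `A_r`). -/
theorem stmt_1 (r : ℕ) (hr : 2 ≤ r)
    (lam : ℂ) (hlam : lam = Complex.exp (2 * Real.pi * Complex.I / (2 * r)))
    (n : ℕ) (hn1 : 1 ≤ n) (hn2 : n ≤ r - 1) :
    (lam ^ (n : ℤ) - lam ^ (-(n : ℤ))) / (lam - lam⁻¹)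
      ∈ Subring.closure {lam, ((2 * (r : ℂ)))⁻¹} ∧
    ((lam ^ (n : ℤ) - lam ^ (-(n : ℤ))) / (lam - lam⁻¹))⁻¹
      ∈ Subring.closure {lam, ((2 * (r : ℂ)))⁻¹} := by
  have hr0 : 2 * r ≠ 0 := by omega
  have hprim : IsPrimitiveRoot lam (2 * r) := by
    simpa [hlam] using Complex.isPrimitiveRoot_exp (2 * r) hr0
  have hn : lam ^ (2 * n : ℤ) ≠ 1 :=
    mod_cast hprim.pow_ne_one_of_pos_of_lt (l := 2 * n) (by omega) (by omega)
  simpa only [quantumInt, Nat.cast_mul, Nat.cast_ofNat] using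
    stmt_1_general (Nat.cast_ne_zero.mpr hr0) hprim.pow_eq_one hn
end

section
/- Let p be an odd prime, s ≥ 1 an integer, and r ≥ 2 an integer such that 2r divides p^s + 1 or 2r divides p^s − 1 (equivalently, r divides (p^s ± 1)/2). Then for every i ≥ 0 one has Δ_i^{p^s} ≡ Δ_i (mod p) in the subring ℤ[λ] of ℂ generated by λ, i.e. Δ_i^{p^s} − Δ_i ∈ p·ℤ[λ]. (First part of Lemma 3 of the paper.) -/
open Complex Real

/-!
Modulo `p` the map `x ↦ x ^ p ^ s` is a ring endomorphism, so its fixed points form a subring.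
The divisibility hypothesis says that this map sends `λ` to `λ` or to `λ⁻¹`; in both cases it
fixes `λ + λ⁻¹ = -Δ_1`, and every `Δ_i` is an integer polynomial in `Δ_1`.
-/

section FrobeniusFixed

variable {R : Type*} [CommRing R] (p s : ℕ) [Fact p.Prime]

theorem natCast_dvd_add_pow_prime_pow_sub (x y : R) :
    (p : R) ∣ (x + y) ^ p ^ s - (x ^ p ^ s + y ^ p ^ s) := by
  obtain ⟨c, hc⟩ := exists_add_pow_prime_pow_eq (Fact.out : p.Prime) x y s
  exact ⟨x * y * c, by linear_combination hc⟩

variable (R) in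
/-- The subring of elements of `R` whose residue class modulo `p` is fixed by the `s`-th iterate
of the Frobenius. It is carved out by divisibility rather than as an equalizer in `R ⧸ (p)`,
because that quotient does not have characteristic `p` when `p` is a unit of `R`. -/
def frobeniusFixedSubring : Subring R where
  carrier := {x | (p : R) ∣ x ^ p ^ s - x}
  zero_mem' := by simp [(Fact.out : p.Prime).ne_zero]
  one_mem' := by simp
  add_mem' {x y} hx hy := by
    change (p : R) ∣ (x + y) ^ p ^ s - (x + y)
    convert (natCast_dvd_add_pow_prime_pow_sub p s x y).add (hx.add hy) using 1
    ring
  mul_mem' {x y} hx hy := by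
    change (p : R) ∣ (x * y) ^ p ^ s - x * y
    rw [mul_pow]
    exact dvd_mul_sub_mul hx hy
  neg_mem' {x} hx := by
    change (p : R) ∣ (-x) ^ p ^ s - -x
    -- Expanding `(x + -x) ^ p ^ s = 0` gives `(-x) ^ p ^ s ≡ -x ^ p ^ s`, for `p = 2` as well.
    have hzero : (x + -x) ^ p ^ s = 0 := by simp [(Fact.out : p.Prime).ne_zero]
    have hadd := natCast_dvd_add_pow_prime_pow_sub p s x (-x)
    rw [hzero, zero_sub, dvd_neg] at hadd
    convert hadd.sub hx using 1
    abel

variable {p s}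

theorem mem_frobeniusFixedSubring {x : R} :
    x ∈ frobeniusFixedSubring R p s ↔ (p : R) ∣ x ^ p ^ s - x :=
  Iff.rfl

theorem add_inv_mem_frobeniusFixedSubring {u : Rˣ} (hu : u ^ p ^ s = u⁻¹ ∨ u ^ p ^ s = u) :
    (u + ↑u⁻¹ : R) ∈ frobeniusFixedSubring R p s := by
  have hsum : (u : R) ^ p ^ s + (↑u⁻¹ : R) ^ p ^ s = u + ↑u⁻¹ := by
    rw [← Units.val_pow_eq_pow_val, ← Units.val_pow_eq_pow_val, inv_pow]
    rcases hu with hu | hu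
    · rw [hu, inv_inv, add_comm]
    · rw [hu]
  simpa only [mem_frobeniusFixedSubring, hsum] using
    natCast_dvd_add_pow_prime_pow_sub p s (u : R) ↑u⁻¹

end FrobeniusFixed

theorem pow_eq_inv_or_eq_self {G : Type*} [Group G] {g : G} {n q : ℕ} (hq : q ≠ 0)
    (hg : g ^ n = 1) (hn : n ∣ q + 1 ∨ n ∣ q - 1) : g ^ q = g⁻¹ ∨ g ^ q = g := by
  have pow_eq_one {m : ℕ} (hm : n ∣ m) : g ^ m = 1 :=
    orderOf_dvd_iff_pow_eq_one.mp ((orderOf_dvd_of_pow_eq_one hg).trans hm)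
  refine hn.imp (fun h => ?_) fun h => ?_
  · exact eq_inv_of_mul_eq_one_left (by rw [← pow_succ, pow_eq_one h])
  · rw [← pow_sub_one_mul hq, pow_eq_one h, one_mul]

theorem mem_subring_of_forall_eq_mul_sub {R : Type*} [Ring R] {A : Subring R} {t : R} {a : ℕ → R}
    (ht : t ∈ A) (h0 : a 0 ∈ A) (h1 : a 1 ∈ A) (hrec : ∀ i, a (i + 2) = t * a (i + 1) - a i) :
    ∀ i, a i ∈ A
  | 0 => h0
  | 1 => h1
  | i + 2 => by
    rw [hrec]
    exact A.sub_mem (A.mul_mem ht (mem_subring_of_forall_eq_mul_sub ht h0 h1 hrec (i + 1)))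
      (mem_subring_of_forall_eq_mul_sub ht h0 h1 hrec i)

theorem stmt_2_general {R : Type*} [CommRing R] {p s n : ℕ} [Fact p.Prime] {u : Rˣ}
    (hn : n ≠ 0) (hu : u ^ n = 1) (hdiv : n ∣ p ^ s + 1 ∨ n ∣ p ^ s - 1)
    {Δ : ℕ → R} (h0 : Δ 0 = 1) (h1 : Δ 1 = -u - ↑u⁻¹)
    (hrec : ∀ i, Δ (i + 2) = Δ 1 * Δ (i + 1) - Δ i) (i : ℕ) :
    ∃ z ∈ Subring.closure {(u : R)}, Δ i ^ p ^ s - Δ i = p * z := by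
  set T := Subring.closure {(u : R)}
  obtain ⟨v, hv, hvu⟩ : ∃ v : Tˣ, v ^ n = 1 ∧ Units.map (T.subtype : T →* R) v = u := by
    have hpow : (⟨u, Subring.subset_closure rfl⟩ : T) ^ n = 1 :=
      Subtype.ext (by simpa using congrArg Units.val hu)
    exact ⟨Units.ofPowEqOne _ n hpow hn, Units.pow_ofPowEqOne hpow hn, Units.ext rfl⟩
  have hΔ1 : Δ 1 ∈ (frobeniusFixedSubring T p s).map T.subtype := by
    have hvfix : v ^ p ^ s = v⁻¹ ∨ v ^ p ^ s = v :=
      pow_eq_inv_or_eq_self (pow_ne_zero s (Fact.out : p.Prime).ne_zero) hv hdiv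
    refine ⟨_, neg_mem (add_inv_mem_frobeniusFixedSubring hvfix), ?_⟩
    rw [h1, ← hvu, ← map_inv, map_neg, map_add, neg_add']
    rfl
  obtain ⟨d, hd, hdΔ⟩ :=
    mem_subring_of_forall_eq_mul_sub hΔ1 (h0 ▸ one_mem _) hΔ1 hrec i
  obtain ⟨z, hz⟩ := mem_frobeniusFixedSubring.mp hd
  exact ⟨z, z.2, by simpa [← hdΔ] using congrArg T.subtype hz⟩

/-- First part of Lemma 3: if `2r` divides `p^s + 1` or `p^s - 1` (`p` an odd
prime, `s ≥ 1`, `r ≥ 2`), then for every `i`, `Δ_i^{p^s} ≡ Δ_i (mod p)` in the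
subring `ℤ[λ]` of `ℂ`, where `Δ_0 = 1`, `Δ_1 = -λ - λ⁻¹` and
`Δ_{i+1} = Δ_1 Δ_i - Δ_{i-1}`. -/
theorem stmt_2 (p : ℕ) (hp : p.Prime) (hodd : Odd p) (s : ℕ) (hs : 1 ≤ s)
    (r : ℕ) (hr : 2 ≤ r)
    (lam : ℂ) (hlam : lam = Complex.exp (2 * Real.pi * Complex.I / (2 * r)))
    (hdiv : (2 * r) ∣ (p ^ s + 1) ∨ (2 * r) ∣ (p ^ s - 1))
    (Δ : ℕ → ℂ) (h0 : Δ 0 = 1) (h1 : Δ 1 = -lam - lam⁻¹)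
    (hrec : ∀ i, 1 ≤ i → Δ (i + 1) = Δ 1 * Δ i - Δ (i - 1))
    (i : ℕ) :
    ∃ z ∈ Subring.closure {lam}, Δ i ^ (p ^ s) - Δ i = (p : ℂ) * z := by
  have hprim : IsPrimitiveRoot lam (2 * r) := by
    simpa [hlam] using Complex.isPrimitiveRoot_exp (2 * r) (by lia)
  have : Fact p.Prime := ⟨hp⟩
  exact stmt_2_general (u := Units.mk0 lam (hprim.ne_zero (by lia))) (by lia)
    (Units.ext hprim.pow_eq_one) hdiv h0 h1 (fun i => hrec (i + 1) (by lia)) i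
end

section
/- Let p be an odd prime, s ≥ 1 an integer, ε ∈ {+1, −1}, and r ≥ 2 an integer such that 2r divides p^s + ε. Let λ = exp(2πi/(2r)) and η = −i(λ − λ^{−1})/√(2r) ∈ ℂ. Then η^{p^s} ≡ −ε·χ^s·η (mod p) in B_r, where χ is the Legendre symbol of −2r modulo p; that is, η^{p^s} + ε·χ^s·η ∈ p·B_r. (Lemma 7 of the paper.) -/
open Complex Real

/-!
Write `q = p ^ s` and `δ = i √(2r)`, so that `η = (λ - λ⁻¹) / δ` and `δ² = -2r`. Modulo `p` the map
`z ↦ z ^ q` is a ring endomorphism. It sends `λ - λ⁻¹` to `λ ^ q - λ ^ (-q) = -ε (λ - λ⁻¹)`, because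
`λ ^ (q + ε) = 1`. By Euler's criterion `δ ^ p = (δ²) ^ ((p - 1) / 2) δ ≡ χ δ`, so it sends `δ` to
`χ ^ s δ`. As it fixes the integer `δ²`, a unit of `B_r`, it also multiplies `δ⁻¹ = δ / δ²` by
`χ ^ s`.
-/

section CharP

variable {R : Type*} [CommRing R] {p : ℕ} [Fact p.Prime] [CharP R p]

theorem intCast_pow_char_pow (s : ℕ) (n : ℤ) : (n : R) ^ p ^ s = n :=
  map_intCast (iterateFrobenius R p s) n

theorem intCast_legendreSym_eq_pow (a : ℤ) : (legendreSym p a : R) = (a : R) ^ (p / 2) := by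
  simpa only [map_intCast, map_pow] using
    congrArg (ZMod.castHom dvd_rfl R) (legendreSym.eq_pow p a)

theorem pow_char_eq_legendreSym_mul (hp : Odd p) {δ : R} {a : ℤ} (hδ : δ ^ 2 = a) :
    δ ^ p = (legendreSym p a : R) * δ :=
  calc δ ^ p = (δ ^ 2) ^ (p / 2) * δ := by
        rw [← pow_mul, ← pow_succ, Nat.two_mul_div_two_add_one_of_odd hp]
    _ = (legendreSym p a : R) * δ := by rw [hδ, intCast_legendreSym_eq_pow]

theorem pow_char_pow_eq_legendreSym_pow_mul (hp : Odd p) (s : ℕ) {δ : R} {a : ℤ}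
    (hδ : δ ^ 2 = a) : δ ^ p ^ s = (legendreSym p a : R) ^ s * δ := by
  induction s with
  | zero => simp
  | succ s ih =>
    have frobenius_fixes : (legendreSym p a : R) ^ p = legendreSym p a :=
      map_intCast (frobenius R p) _
    rw [pow_succ p, pow_mul, ih, mul_pow, pow_right_comm, frobenius_fixes,
      pow_char_eq_legendreSym_mul hp hδ, pow_succ, mul_assoc]

theorem units_inv_pow_char_pow_eq_legendreSym_pow_mul (hp : Odd p) (s : ℕ) {δ : Rˣ} {a : ℤ}
    (hδ : (δ : R) ^ 2 = a) :
    (↑δ⁻¹ : R) ^ p ^ s = (legendreSym p a : R) ^ s * ↑δ⁻¹ := by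
  have isUnit_a : IsUnit (a : R) := hδ ▸ δ.isUnit.pow 2
  have inv_mul_a : (↑δ⁻¹ : R) * a = δ := by rw [← hδ, sq, Units.inv_mul_cancel_left]
  refine isUnit_a.mul_right_cancel ?_
  calc (↑δ⁻¹ : R) ^ p ^ s * a = (↑δ⁻¹ * a) ^ p ^ s := by rw [mul_pow, intCast_pow_char_pow]
    _ = (legendreSym p a : R) ^ s * ↑δ⁻¹ * a := by
      rw [inv_mul_a, pow_char_pow_eq_legendreSym_pow_mul hp s hδ, mul_assoc, inv_mul_a]

theorem units_sub_inv_pow_char_pow {s : ℕ} {ε : ℤ} (hε : ε = 1 ∨ ε = -1) {x : Rˣ}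
    (hx : x ^ ((p : ℤ) ^ s + ε) = 1) :
    ((x : R) - ↑x⁻¹) ^ p ^ s = -ε * (x - ↑x⁻¹) := by
  have pow_eq_zpow_neg : x ^ p ^ s = x ^ (-ε) := by
    rw [zpow_neg, ← mul_eq_one_iff_eq_inv, ← zpow_natCast, ← zpow_add]
    exact_mod_cast hx
  rw [sub_pow_expChar_pow, ← Units.val_pow_eq_pow_val, ← Units.val_pow_eq_pow_val, inv_pow,
    pow_eq_zpow_neg]
  rcases hε with rfl | rfl <;> simp

end CharP

theorem natCast_dvd_sub_inv_mul_inv_pow_prime_pow_add {R : Type*} [CommRing R]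
    {p s : ℕ} [Fact p.Prime] (hp : Odd p) {ε a : ℤ} (hε : ε = 1 ∨ ε = -1) {x δ : Rˣ}
    (hx : x ^ ((p : ℤ) ^ s + ε) = 1) (hδ : (δ : R) ^ 2 = a) :
    (p : R) ∣ (((x : R) - ↑x⁻¹) * ↑δ⁻¹) ^ p ^ s +
      ε * (legendreSym p a : R) ^ s * (((x : R) - ↑x⁻¹) * ↑δ⁻¹) := by
  by_cases isUnit_p : IsUnit (p : R)
  · exact isUnit_p.dvd
  have : CharP (R ⧸ Ideal.span {(p : R)}) p := CharP.quotient R p isUnit_p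
  let red := Ideal.Quotient.mk (Ideal.span {(p : R)})
  let redUnits : Rˣ →* (R ⧸ Ideal.span {(p : R)})ˣ := Units.map red
  have red_sub := units_sub_inv_pow_char_pow (s := s) hε (x := redUnits x)
    (by rw [← map_zpow, hx, map_one])
  have red_inv := units_inv_pow_char_pow_eq_legendreSym_pow_mul hp s (δ := redUnits δ)
    (a := a) (by simpa [redUnits] using congrArg red hδ)
  simp only [redUnits, ← map_inv, Units.coe_map, MonoidHom.coe_coe] at red_sub red_inv
  rw [← Ideal.mem_span_singleton, ← Ideal.Quotient.eq_zero_iff_mem]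
  simp only [map_add, map_mul, map_pow, map_sub, map_intCast, mul_pow]
  rw [red_sub, red_inv]
  ring

theorem exists_mem_subring_sub_inv_mul_inv_pow_prime_pow_add {A : Type*} [CommRing A]
    (B : Subring A) {p s : ℕ} [Fact p.Prime] (hp : Odd p) {ε a : ℤ} (hε : ε = 1 ∨ ε = -1) {x δ : Aˣ}
    (hxB : x ∈ B.toSubmonoid.units) (hδB : δ ∈ B.toSubmonoid.units)
    (hx : x ^ ((p : ℤ) ^ s + ε) = 1) (hδ : (δ : A) ^ 2 = a) :
    ∃ z ∈ B, (((x : A) - ↑x⁻¹) * ↑δ⁻¹) ^ p ^ s +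
      ε * (legendreSym p a : A) ^ s * (((x : A) - ↑x⁻¹) * ↑δ⁻¹) = p * z := by
  let toUnitsB : B.toSubmonoid.units ≃* Bˣ := B.toSubmonoid.unitsEquivUnitsType
  obtain ⟨z, hz⟩ := natCast_dvd_sub_inv_mul_inv_pow_prime_pow_add (s := s) hp hε
    (x := toUnitsB ⟨x, hxB⟩) (δ := toUnitsB ⟨δ, hδB⟩) (a := a)
    (by rw [← map_zpow, ← map_one toUnitsB]; exact congrArg toUnitsB (Subtype.ext hx))
    (Subtype.ext (by simpa using! hδ))
  exact ⟨z, z.2, by simpa using! congrArg B.subtype hz⟩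

/-- The subring of a field generated by `n⁻¹` and all algebraic integers. For `n = 2r` in `ℂ` it
is the coefficient ring `B_r`. -/
def integersAdjoinInv {K : Type*} [Field K] (n : K) : Subring K :=
  Subring.closure (insert n⁻¹ {x : K | IsIntegral ℤ x})

namespace integersAdjoinInv

variable {K : Type*} [Field K] {n : K}

theorem inv_mem : n⁻¹ ∈ integersAdjoinInv n :=
  Subring.subset_closure (Set.mem_insert _ _)

theorem mem_of_isIntegral {x : K} (hx : IsIntegral ℤ x) : x ∈ integersAdjoinInv n :=
  Subring.subset_closure (Set.mem_insert_of_mem _ hx)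

theorem mem_units_of_isPrimitiveRoot {k : ℕ} (hk : 0 < k) {ζ : Kˣ}
    (hζ : IsPrimitiveRoot (ζ : K) k) : ζ ∈ (integersAdjoinInv n).toSubmonoid.units :=
  ⟨mem_of_isIntegral (hζ.isIntegral hk),
    mem_of_isIntegral (by simpa using hζ.inv.isIntegral hk)⟩

theorem mem_units_of_sq_eq_neg (hn : IsIntegral ℤ n) {δ : Kˣ} (hδ : (δ : K) ^ 2 = -n) :
    δ ∈ (integersAdjoinInv n).toSubmonoid.units := by
  have δ_mem : (δ : K) ∈ integersAdjoinInv n :=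
    mem_of_isIntegral (.of_pow two_pos (hδ ▸ hn.neg))
  have inv_eq : (↑δ⁻¹ : K) = -(δ * n⁻¹) := by
    rw [← neg_neg n, ← hδ]
    simp [sq]
  have inv_δ_mem : (↑δ⁻¹ : K) ∈ integersAdjoinInv n :=
    inv_eq ▸ neg_mem (mul_mem δ_mem inv_mem)
  exact ⟨δ_mem, inv_δ_mem⟩

end integersAdjoinInv

/-- Lemma 7: if `2r` divides `p^s + ε` with `ε = ±1` (`p` an odd prime,
`s ≥ 1`, `r ≥ 2`) and `η = -i(λ - λ⁻¹)/√(2r)`, then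
`η^{p^s} ≡ -ε χ^s η (mod p)` in `B_r`, where `χ` is the Legendre symbol of
`-2r` modulo `p` and `B_r` is the smallest subring of `ℂ` containing `1/(2r)`
and all algebraic integers. -/
theorem stmt_5 (p s r : ℕ) [Fact p.Prime] (hodd : Odd p) (hs : 1 ≤ s) (hr : 2 ≤ r)
    (ε : ℤ) (hε : ε = 1 ∨ ε = -1)
    (hdiv : (2 * (r : ℤ)) ∣ ((p : ℤ) ^ s + ε))
    (lam η : ℂ) (hlam : lam = Complex.exp (2 * Real.pi * Complex.I / (2 * r)))
    (hη : η = -Complex.I * (lam - lam⁻¹) / (Real.sqrt (2 * r) : ℂ)) :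
    ∃ z ∈ Subring.closure (insert ((2 * (r : ℂ)))⁻¹ {x : ℂ | IsIntegral ℤ x}),
      η ^ (p ^ s) + (ε : ℂ) * ((legendreSym p (-(2 * r)) : ℤ) : ℂ) ^ s * η
        = (p : ℂ) * z := by
  have two_r_ne : (2 * r : ℂ) ≠ 0 := by norm_cast; omega
  have lam_primitive : IsPrimitiveRoot lam (2 * r) := by
    simpa [hlam] using isPrimitiveRoot_exp (2 * r) (by omega)
  have lam_zpow : lam ^ ((p : ℤ) ^ s + ε) = 1 :=
    (lam_primitive.zpow_eq_one_iff_dvd _).2 (by exact_mod_cast hdiv)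
  have δ_sq : (I * √(2 * r) : ℂ) ^ 2 = -(2 * r) := by
    rw [mul_pow, I_sq, ← ofReal_pow, Real.sq_sqrt (by positivity)]
    push_cast
    ring
  let lamUnit : ℂˣ := Units.mk0 lam (lam_primitive.ne_zero (by omega))
  let δ : ℂˣ := Units.mk0 (I * √(2 * r)) (ne_zero_pow two_ne_zero (δ_sq ▸ neg_ne_zero.2 two_r_ne))
  have η_eq : η = (lamUnit - ↑lamUnit⁻¹) * ↑δ⁻¹ := by
    simp only [hη, lamUnit, δ, Units.val_inv_eq_inv_val, Units.val_mk0, mul_inv, inv_I]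
    ring
  rw [η_eq]
  exact exists_mem_subring_sub_inv_mul_inv_pow_prime_pow_add (integersAdjoinInv (2 * r : ℂ)) hodd hε
    (integersAdjoinInv.mem_units_of_isPrimitiveRoot (by omega) lam_primitive)
    (integersAdjoinInv.mem_units_of_sq_eq_neg
      (by exact_mod_cast isIntegral_algebraMap (R := ℤ) (x := 2 * r)) δ_sq)
    (Units.ext (by simpa [lamUnit] using lam_zpow)) (by push_cast; exact δ_sq)
end

section
/- Let r ≥ 1 be an integer, p a prime not dividing 2r, and s ≥ 1. Let ζ = exp(2πi/(8r)) and let A denote the smallest subring of ℂ containing ζ and 1/(2r). Then for every n ≥ 1 and every n × n matrix E with entries in A, Trace(E^{p^s}) ≡ (Trace E)^{p^s} (mod p) in A, i.e. Trace(E^{p^s}) − (Trace E)^{p^s} ∈ p·A. (The key trace congruence proved in Section 4 of the paper.) -/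
open Complex Real

/-!
If `q` is a power of `p`, then over a ring of characteristic `p` the identity
`(X - M) ^ q = X ^ q - M ^ q` in `Mₙ(R)[X]` gives `χ_M(X) ^ q = χ_{M ^ q}(X ^ q)` on taking
determinants. So the coefficients of `χ_{M ^ q}` are the `q`-th powers of those of `χ_M`, and in
particular `tr (M ^ q) = (tr M) ^ q`. Over an arbitrary commutative ring, apply this modulo `p`.
-/

section ExponentialCharacteristic

open Polynomial

variable {R n : Type*} [CommRing R] [Fintype n] [DecidableEq n] (p : ℕ) [ExpChar R p]

theorem expand_charpoly_pow_expChar_pow (M : Matrix n n R) (s : ℕ) :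
    expand R (p ^ s) (M ^ p ^ s).charpoly = M.charpoly ^ p ^ s := by
  cases isEmpty_or_nonempty n
  · simp [Matrix.charpoly]
  have : ExpChar (Matrix n n R) p :=
    expChar_of_injective_ringHom (f := Matrix.scalar n) (fun _ _ ↦ Matrix.scalar_inj.mp) p
  have charmatrix_pow :
      (M ^ p ^ s).charmatrix.map (expand R (p ^ s)) = M.charmatrix ^ p ^ s := by
    refine matPolyEquiv.injective ?_
    rw [map_pow, Matrix.matPolyEquiv_charmatrix,
      sub_pow_expChar_pow_of_commute _ _ (C M).commute_X, ← C_pow]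
    exact matPolyEquiv_eq_X_pow_sub_C (p ^ s) M
  rw [Matrix.charpoly, AlgHom.map_det, AlgHom.mapMatrix_apply, charmatrix_pow, Matrix.det_pow,
    Matrix.charpoly]

theorem charpoly_pow_expChar_pow (M : Matrix n n R) (s : ℕ) :
    (M ^ p ^ s).charpoly = M.charpoly.map (iterateFrobenius R p s) := by
  apply expand_injective (expChar_pow_pos R p s)
  rw [expand_charpoly_pow_expChar_pow, ← map_expand, map_iterateFrobenius_expand]

theorem trace_pow_expChar_pow (M : Matrix n n R) (s : ℕ) :
    (M ^ p ^ s).trace = M.trace ^ p ^ s := by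
  cases isEmpty_or_nonempty n
  · simp [Matrix.trace, expChar_ne_zero R p]
  rw [Matrix.trace_eq_neg_charpoly_coeff, Matrix.trace_eq_neg_charpoly_coeff,
    charpoly_pow_expChar_pow, coeff_map, ← iterateFrobenius_def, map_neg]

end ExponentialCharacteristic

theorem natCast_dvd_trace_pow_sub_trace_pow {R n : Type*} [CommRing R] [Fintype n]
    [DecidableEq n] {p : ℕ} (hp : p.Prime) (M : Matrix n n R) (s : ℕ) :
    (p : R) ∣ (M ^ p ^ s).trace - M.trace ^ p ^ s := by
  by_cases hu : IsUnit (p : R)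
  · exact hu.dvd
  have : Fact p.Prime := ⟨hp⟩
  have : CharP (R ⧸ Ideal.span {(p : R)}) p := CharP.quotient R p hu
  let φ := Ideal.Quotient.mk (Ideal.span {(p : R)})
  have trace_congr : φ (M ^ p ^ s).trace = φ (M.trace ^ p ^ s) := by
    calc φ (M ^ p ^ s).trace = (φ.mapMatrix M ^ p ^ s).trace := by
          rw [← map_pow, AddMonoidHom.map_trace, RingHom.mapMatrix_apply]
      _ = (φ.mapMatrix M).trace ^ p ^ s := trace_pow_expChar_pow p _ s
      _ = φ (M.trace ^ p ^ s) := by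
          rw [map_pow, AddMonoidHom.map_trace, RingHom.mapMatrix_apply]
  rwa [← Ideal.mem_span_singleton, ← Ideal.Quotient.mk_eq_mk_iff_sub_mem]

theorem stmt_7_general {R n : Type*} [CommRing R] [Fintype n] [DecidableEq n] (A : Subring R)
    {p : ℕ} (hp : p.Prime) (s : ℕ) (E : Matrix n n R) (hE : ∀ i j, E i j ∈ A) :
    ∃ z ∈ A, (E ^ p ^ s).trace - E.trace ^ p ^ s = (p : R) * z := by
  obtain ⟨F, rfl⟩ : ∃ F : Matrix n n A, A.subtype.mapMatrix F = E :=
    ⟨.of fun i j ↦ ⟨E i j, hE i j⟩, rfl⟩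
  obtain ⟨z, hz⟩ := natCast_dvd_trace_pow_sub_trace_pow hp F s
  refine ⟨z, z.2, ?_⟩
  rw [← map_pow, RingHom.mapMatrix_apply, RingHom.mapMatrix_apply, ← AddMonoidHom.map_trace,
    ← AddMonoidHom.map_trace, ← map_pow, ← map_sub, hz, map_mul, map_natCast, A.subtype_apply]

/-- The trace congruence of Section 4: if `p` is a prime not dividing `2r`,
`s ≥ 1`, `ζ = exp(2πi/(8r))`, `A = ℤ[1/(2r)][ζ]` and `E` is a square matrix
with entries in `A`, then `Trace(E^{p^s}) ≡ (Trace E)^{p^s} (mod p)` in `A`. -/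
theorem stmt_7 (r : ℕ) (hr : 1 ≤ r) (p : ℕ) (hp : p.Prime) (hpr : ¬ p ∣ 2 * r)
    (s : ℕ) (hs : 1 ≤ s)
    (ζ : ℂ) (hζ : ζ = Complex.exp (2 * Real.pi * Complex.I / (8 * r)))
    (n : ℕ) (hn : 1 ≤ n) (E : Matrix (Fin n) (Fin n) ℂ)
    (hE : ∀ i j, E i j ∈ Subring.closure {ζ, ((2 * (r : ℂ)))⁻¹}) :
    ∃ z ∈ Subring.closure {ζ, ((2 * (r : ℂ)))⁻¹},
      (E ^ (p ^ s)).trace - E.trace ^ (p ^ s) = (p : ℂ) * z :=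
  stmt_7_general _ hp s E hE
end

section
/- Let p be an odd prime and q, r positive integers with p not dividing 2qr. Let ζ = exp(2πi/(4qr)), and let m, l be integers and ε ∈ {+1, −1}. Then (Σ_{n=1}^{2qr} ζ^{−mpn² − 2(ql+ε)n})^p ≡ Σ_{n=1}^{2qr} ζ^{−mn² − 2(ql+ε)n} (mod p) in ℤ[ζ], i.e. the difference lies in p·ℤ[ζ]. (Congruence for Gauss-type sums proved in Section 5 of the paper.) -/
open Complex Real

/-!
Modulo `p` the `p`-th power map is additive, so the `p`-th power of the first sum is congruent to
the sum of the `p`-th powers of its terms. With `Q n = a n² + b n`, the `p`-th power of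
`ζ ^ (a p n² + b n)` is `ζ ^ Q (p n)`. Since `n ↦ ζ ^ Q n` is periodic modulo `N` and `p` is
invertible modulo `N`, the substitution `n ↦ p n` only permutes the terms of `∑ ζ ^ Q n`.
-/

theorem natCast_dvd_sum_pow_sub_sum_pow {ι R : Type*} [CommRing R] {p : ℕ} (hp : p.Prime)
    (s : Finset ι) (f : ι → R) :
    (p : R) ∣ (∑ i ∈ s, f i) ^ p - ∑ i ∈ s, f i ^ p := by
  by_cases hunit : IsUnit (p : R)
  · exact hunit.dvd
  · have : Fact p.Prime := ⟨hp⟩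
    have : CharP (R ⧸ Ideal.span {(p : R)}) p := CharP.quotient R p hunit
    rw [← Ideal.mem_span_singleton, ← Ideal.Quotient.eq]
    simp only [map_pow, map_sum, sum_pow_char]

section PeriodicSums

variable {M : Type*} [AddCommMonoid M] {N : ℕ}

theorem sum_Icc_natCast_zmod [NeZero N] (g : ZMod N → M) :
    ∑ n ∈ Finset.Icc 1 N, g n = ∑ x, g x := by
  have hinj : Set.InjOn (fun n : ℕ ↦ (n : ZMod N)) (Finset.Icc 1 N) := by
    intro a ha b hb hab
    rw [Finset.mem_coe, Finset.mem_Icc] at ha hb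
    have hdvd : (N : ℤ) ∣ b - a := Nat.modEq_iff_dvd.1 ((ZMod.natCast_eq_natCast_iff a b N).1 hab)
    have hzero : (b : ℤ) - a = 0 := Int.eq_zero_of_abs_lt_dvd hdvd (by rw [abs_lt]; omega)
    omega
  have hsurj : Set.SurjOn (fun n : ℕ ↦ (n : ZMod N)) (Finset.Icc 1 N)
      (Finset.univ : Finset (ZMod N)) :=
    Finset.surjOn_of_injOn_of_card_le _ (fun _ _ ↦ Finset.mem_univ _) hinj (by simp [ZMod.card])
  exact Finset.sum_nbij _ (fun _ _ ↦ Finset.mem_univ _) hinj hsurj fun _ _ ↦ rfl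

theorem sum_Icc_comp_mul_of_periodic {f : ℤ → M} (hf : Function.Periodic f N) {u : ℕ}
    (hu : u.Coprime N) :
    ∑ n ∈ Finset.Icc 1 N, f (u * n) = ∑ n ∈ Finset.Icc 1 N, f n := by
  obtain rfl | hN := eq_or_ne N 0
  · simp
  have : NeZero N := ⟨hN⟩
  let g : ZMod N → M := fun x ↦ f x.val
  have hg (k : ℤ) : f k = g k := by
    simp only [g, ZMod.val_intCast, Int.emod_def, mul_comm (N : ℤ), ← smul_eq_mul, hf.sub_zsmul_eq]
  calc ∑ n ∈ Finset.Icc 1 N, f (u * n)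
    _ = ∑ n ∈ Finset.Icc 1 N, g (u * (n : ZMod N)) := by
      simp only [hg, Int.cast_mul, Int.cast_natCast]
    _ = ∑ x : ZMod N, g (u * x) := sum_Icc_natCast_zmod fun x : ZMod N ↦ g (u * x)
    _ = ∑ x, g x := Equiv.sum_comp (ZMod.unitOfCoprime u hu).mulLeft g
    _ = ∑ n ∈ Finset.Icc 1 N, g n := (sum_Icc_natCast_zmod g).symm
    _ = ∑ n ∈ Finset.Icc 1 N, f n := by simp only [hg, Int.cast_natCast]

end PeriodicSums

theorem periodic_zpow_quadratic {G : Type*} [Group G] {ζ : G} {N : ℕ} (hζ : ζ ^ (2 * N) = 1)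
    {a b : ℤ} (heven : Even (a * N + b)) :
    Function.Periodic (fun n : ℤ ↦ ζ ^ (a * n ^ 2 + b * n)) N := by
  intro n
  obtain ⟨c, hc⟩ := heven
  have hexp : a * (n + N) ^ 2 + b * (n + N) =
      a * n ^ 2 + b * n + (2 * N : ℕ) * (a * n + c) := by
    push_cast
    linear_combination (N : ℤ) * hc
  simp only [hexp, zpow_add, zpow_mul, zpow_natCast, hζ, one_zpow, mul_one]

theorem natCast_dvd_quadratic_sum_pow_sub {R : Type*} [CommRing R] {ζ : Rˣ} {p N : ℕ}
    (hp : p.Prime) (hpN : ¬ p ∣ N) {a b : ℤ}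
    (hper : Function.Periodic (fun n : ℤ ↦ ζ ^ (a * n ^ 2 + b * n)) N) :
    (p : R) ∣ (∑ n ∈ Finset.Icc 1 N, ((ζ ^ (a * p * (n : ℤ) ^ 2 + b * n) : Rˣ) : R)) ^ p
      - ∑ n ∈ Finset.Icc 1 N, ((ζ ^ (a * (n : ℤ) ^ 2 + b * n) : Rˣ) : R) := by
  have hpow (n : ℤ) : (ζ ^ (a * p * n ^ 2 + b * n)) ^ p = ζ ^ (a * (p * n) ^ 2 + b * (p * n)) := by
    rw [← zpow_natCast, ← zpow_mul]
    congr 1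
    ring
  have hsum := sum_Icc_comp_mul_of_periodic (hper.comp ((↑) : Rˣ → R))
    (hp.coprime_iff_not_dvd.2 hpN)
  simp only [Function.comp_apply, ← hpow, Units.val_pow_eq_pow_val] at hsum
  rw [← hsum]
  exact natCast_dvd_sum_pow_sub_sum_pow hp _ _

theorem map_units_zpow {F M G : Type*} [Monoid M] [DivisionMonoid G] [FunLike F M G]
    [MonoidHomClass F M G] (f : F) (u : Mˣ) (k : ℤ) : f (u ^ k : Mˣ) = f u ^ k :=
  ((f : M →* G).comp (Units.coeHom M)).map_zpow u k

theorem stmt_9_general {K : Type*} [Field K] {ζ : K} {p N : ℕ} (hp : p.Prime) (hpN : ¬ p ∣ N)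
    (hζ : ζ ^ (2 * N) = 1) {a b : ℤ} (heven : Even (a * N + b)) :
    ∃ z ∈ Subring.closure {ζ},
      (∑ n ∈ Finset.Icc 1 N, ζ ^ (a * p * (n : ℤ) ^ 2 + b * (n : ℤ))) ^ p
        - ∑ n ∈ Finset.Icc 1 N, ζ ^ (a * (n : ℤ) ^ 2 + b * (n : ℤ)) = (p : K) * z := by
  have hN : 2 * N ≠ 0 := mul_ne_zero two_ne_zero fun h ↦ hpN (h ▸ dvd_zero p)
  let u : (Subring.closure {ζ})ˣ :=
    Units.ofPowEqOne ⟨ζ, Subring.mem_closure_of_mem rfl⟩ (2 * N) (Subtype.ext hζ) hN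
  have hu : u ^ (2 * N) = 1 := Units.pow_ofPowEqOne _ hN
  obtain ⟨z, hz⟩ := natCast_dvd_quadratic_sum_pow_sub hp hpN (periodic_zpow_quadratic hu heven)
  refine ⟨z, z.2, ?_⟩
  have hcoe (k : ℤ) : (((u ^ k : (Subring.closure {ζ})ˣ) : Subring.closure {ζ}) : K) = ζ ^ k :=
    map_units_zpow (Subring.closure {ζ}).subtype u k
  simpa [hcoe] using congrArg (Subring.closure {ζ}).subtype hz

/-- The Gauss-sum congruence of Section 5: for an odd prime `p` not dividing
`2qr`, `ζ = exp(2πi/(4qr))`, integers `m, l` and `ε = ±1`,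
`(Σ_{n=1}^{2qr} ζ^{-mpn² - 2(ql+ε)n})^p ≡ Σ_{n=1}^{2qr} ζ^{-mn² - 2(ql+ε)n}
(mod p)` in `ℤ[ζ]`. -/
theorem stmt_9 (p q r : ℕ) (hp : p.Prime) (hodd : Odd p)
    (hq : 0 < q) (hr : 0 < r) (hpqr : ¬ p ∣ 2 * q * r)
    (ζ : ℂ) (hζ : ζ = Complex.exp (2 * Real.pi * Complex.I / (4 * q * r)))
    (m l ε : ℤ) (hε : ε = 1 ∨ ε = -1) :
    ∃ z ∈ Subring.closure {ζ},
      (∑ n ∈ Finset.Icc 1 (2 * q * r),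
          ζ ^ (-(m * p * (n : ℤ) ^ 2) - 2 * ((q : ℤ) * l + ε) * (n : ℤ))) ^ p
        - ∑ n ∈ Finset.Icc 1 (2 * q * r),
            ζ ^ (-(m * (n : ℤ) ^ 2) - 2 * ((q : ℤ) * l + ε) * (n : ℤ))
        = (p : ℂ) * z := by
  have hroot : ζ ^ (2 * (2 * q * r)) = 1 := by
    have hexp := (Complex.isPrimitiveRoot_exp (2 * (2 * q * r)) (by positivity)).pow_eq_one
    rw [hζ]
    convert hexp using 4
    push_cast
    ring
  have heven : Even (-m * (2 * q * r : ℕ) + -(2 * ((q : ℤ) * l + ε))) :=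
    ⟨-(m * q * r) - (q * l + ε), by push_cast; ring⟩
  simpa only [neg_mul, ← sub_eq_add_neg] using stmt_9_general hp hpqr hroot heven
end

section
/- Reciprocity for generalized Gauss sums (Siegel's formula, in the form stated in the paper): let α, γ be positive integers and β an integer with αγ + β even. Then Σ_{k=0}^{γ−1} exp(πi(αk² + βk)/γ) = exp(πi/4) · exp(−πiβ²/(4αγ)) · √(γ/α) · Σ_{k=0}^{α−1} exp(−πi(γk² + βk)/α), an identity of complex numbers. -/
open Complex Real

/-!
The Jacobi theta function `θ(z, τ) = ∑ exp (2πinz + πin²τ)` is evaluated in two ways as `τ` tends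
vertically to the rational point `α / γ`, with `z = β / (2γ)`. At `τ = α / γ + iε` its series is a
Gaussian sum of width `ε^(-1/2)` weighted by the `γ`-periodic summands of the left-hand Gauss sum,
so `√ε θ` tends to their mean. The functional equation moves `τ` to `-1 / τ`, close to `-γ / α`,
and turns `θ` into a Gaussian sum weighted by the `α`-periodic summands of the right-hand Gauss sum.
Comparing the limits gives the reciprocity law; the eighth root of unity is the limit of the
automorphy factor `(-iτ)^(-1/2)`.
-/

open Filter Topology

lemma tsum_int_eq_sum_tsum_mul_add {R : Type*} [AddCommGroup R] [UniformSpace R]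
    [IsUniformAddGroup R] [CompleteSpace R] [T0Space R] {f : ℤ → R} (hf : Summable f)
    (N : ℕ) [NeZero N] :
    ∑' n, f n = ∑ k ∈ Finset.range N, ∑' m : ℤ, f (m * N + k) := by
  let e : Fin N × ℤ ≃ ℤ := (Equiv.prodComm _ _).trans (Int.divModEquiv N).symm
  have hfe : Summable fun p => f (e p) := e.summable_iff.mpr hf
  rw [← e.tsum_eq, hfe.tsum_prod, tsum_fintype,
    Finset.sum_range fun k => ∑' m : ℤ, f (m * N + k)]
  rfl

lemma summable_periodic_mul {R : Type*} [NormedRing R] [CompleteSpace R] {c f : ℤ → R} {N : ℕ}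
    [NeZero N] (hc : Function.Periodic c N) (hf : Summable fun n => ‖f n‖) :
    Summable fun n => c n * f n := by
  have hfin : (Set.range c).Finite :=
    hc.image_Ioc (by exact_mod_cast NeZero.pos N) 0 ▸ (Set.finite_Ioc 0 (0 + (N : ℤ))).image c
  obtain ⟨C, hC⟩ := hfin.isBounded.exists_norm_le
  refine (hf.mul_left C).of_norm_bounded fun n => (norm_mul_le _ _).trans ?_
  gcongr
  exact hC _ (Set.mem_range_self n)

lemma cpow_half_ofReal_mul {x : ℝ} (hx : 0 ≤ x) (z : ℂ) :
    ((x : ℂ) * z) ^ (1 / 2 : ℂ) = (√x : ℂ) * z ^ (1 / 2 : ℂ) := by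
  have hsqrt : (√x : ℂ) = (x : ℂ) ^ (1 / 2 : ℂ) := by
    rw [Real.sqrt_eq_rpow, ofReal_cpow hx]
    norm_num
  rcases hx.eq_or_lt with rfl | hx
  · simp
  rcases eq_or_ne z 0 with rfl | hz
  · simp
  have hx' : (x : ℂ) ≠ 0 := ofReal_ne_zero.mpr hx.ne'
  rw [hsqrt, cpow_def_of_ne_zero (mul_ne_zero hx' hz), log_ofReal_mul hx hz, ofReal_log hx.le,
    add_mul, Complex.exp_add, ← cpow_def_of_ne_zero hx', ← cpow_def_of_ne_zero hz]

lemma one_div_cpow_half_neg_I_mul {x : ℝ} (hx : 0 ≤ x) :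
    1 / (-I * x) ^ (1 / 2 : ℂ) = cexp (π * I / 4) * √x⁻¹ := by
  have hroot : (-I) ^ (1 / 2 : ℂ) = (cexp (π * I / 4))⁻¹ := by
    rw [cpow_def_of_ne_zero (neg_ne_zero.mpr I_ne_zero), log_neg_I, ← Complex.exp_neg]
    ring_nf
  rw [mul_comm, cpow_half_ofReal_mul hx, hroot, Real.sqrt_inv, ofReal_inv, one_div, mul_inv,
    inv_inv, mul_comm]

lemma tendsto_one_div_cpow_half_neg_I_mul {ι : Type*} {l : Filter ι} {τ : ι → ℂ} {x : ℝ}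
    (hτ : Tendsto τ l (𝓝 x)) (hx : 0 < x) :
    Tendsto (fun i => 1 / (-I * τ i) ^ (1 / 2 : ℂ)) l (𝓝 (cexp (π * I / 4) * √x⁻¹)) := by
  have hslit : -I * x ∈ slitPlane := Or.inr (by simpa using hx.ne')
  have hne : (-I * x) ^ (1 / 2 : ℂ) ≠ 0 := by simp [hx.ne']
  rw [← one_div_cpow_half_neg_I_mul hx.le]
  exact tendsto_const_nhds.div ((hτ.const_mul (-I)).cpow tendsto_const_nhds hslit) hne

lemma tendsto_jacobiTheta₂_comap_im_atTop (z : ℂ) :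
    Tendsto (jacobiTheta₂ z) (comap im atTop) (𝓝 1) := by
  have him : Tendsto im (comap im atTop) atTop := tendsto_comap
  rw [← tsum_ite_eq (0 : ℤ) (fun _ => (1 : ℂ))]
  refine tendsto_tsum_of_dominated_convergence
    (bound := fun n : ℤ => rexp (-π * (1 * n ^ 2 - 2 * |z.im| * |n|))) ?_ (fun n => ?_) ?_
  · simpa using summable_pow_mul_jacobiTheta₂_term_bound |z.im| one_pos 0
  · rcases eq_or_ne n 0 with rfl | hn
    · simpa [jacobiTheta₂_term] using tendsto_const_nhds
    simp only [hn, if_false]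
    rw [tendsto_zero_iff_norm_tendsto_zero]
    simp only [norm_jacobiTheta₂_term]
    have hcoeff : -π * (n : ℝ) ^ 2 < 0 :=
      mul_neg_of_neg_of_pos (neg_neg_of_pos pi_pos) (by positivity)
    exact Real.tendsto_exp_atBot.comp
      (tendsto_atBot_add_const_right _ _ (him.const_mul_atTop_of_neg hcoeff))
  · filter_upwards [him.eventually_ge_atTop 1] with τ hτ n
    exact norm_jacobiTheta₂_term_le one_pos le_rfl hτ n

lemma jacobiTheta₂_eq_tsum_exp_add_sq (z τ : ℂ) :
    jacobiTheta₂ z τ =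
      1 / (-I * τ) ^ (1 / 2 : ℂ) * ∑' n : ℤ, cexp (-π * I * (n + z) ^ 2 / τ) := by
  rw [jacobiTheta₂_functional_equation, ← jacobiTheta₂_neg_left, mul_assoc, jacobiTheta₂,
    ← tsum_mul_left]
  congr 2 with n
  rw [jacobiTheta₂_term, ← Complex.exp_add]
  ring_nf

lemma summable_exp_neg_mul_add_sq {w : ℂ} (hw : 0 < w.re) (x : ℂ) :
    Summable fun n : ℤ => cexp (-π * w * (n + x) ^ 2) := by
  have hτ : 0 < (I * w).im := by simpa using hw
  refine (((summable_jacobiTheta₂_term_iff (I * w * x) (I * w)).mpr hτ).mul_left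
    (cexp (-π * w * x ^ 2))).congr fun n => ?_
  rw [jacobiTheta₂_term, ← Complex.exp_add]
  congr 1
  linear_combination (2 * π * n * w * x + π * n ^ 2 * w) * I_sq

section GaussianSums

variable {z : ℝ → ℂ} {z₀ : ℂ}

lemma tendsto_sqrt_mul_tsum_exp_neg_sq_div (hz : Tendsto z (𝓝[>] 0) (𝓝 z₀)) (hz₀ : 0 < z₀.re)
    (x : ℂ) :
    Tendsto (fun ε : ℝ => √ε * ∑' m : ℤ, cexp (-π * ε * (m + x) ^ 2 / z ε)) (𝓝[>] 0)
      (𝓝 (z₀ ^ (1 / 2 : ℂ))) := by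
  have hθ : Tendsto (fun ε : ℝ => jacobiTheta₂ x (I * z ε / ε)) (𝓝[>] 0) (𝓝 1) := by
    refine (tendsto_jacobiTheta₂_comap_im_atTop x).comp (tendsto_comap_iff.mpr ?_)
    refine (((continuous_re.tendsto z₀).comp hz).pos_mul_atTop hz₀
      tendsto_inv_nhdsGT_zero).congr fun ε => ?_
    simp only [Function.comp_apply, div_ofReal_im, I_mul_im]
    exact (div_eq_mul_inv _ _).symm
  have hz₀_ne : z₀ ≠ 0 := ne_of_apply_ne re hz₀.ne'
  have hroot : Tendsto (fun ε => z ε ^ (1 / 2 : ℂ)) (𝓝[>] 0) (𝓝 (z₀ ^ (1 / 2 : ℂ))) :=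
    hz.cpow tendsto_const_nhds (Or.inl hz₀)
  rw [← mul_one (z₀ ^ (1 / 2 : ℂ))]
  refine (hroot.mul hθ).congr' ?_
  filter_upwards [self_mem_nhdsWithin, hz.eventually_ne hz₀_ne] with ε (hε : 0 < ε) hzε
  have hscale : -I * (I * z ε / ε) = ((ε⁻¹ : ℝ) : ℂ) * z ε := by
    push_cast
    linear_combination (-z ε / ε) * I_sq
  have hroot_ne : z ε ^ (1 / 2 : ℂ) ≠ 0 := by simp [hzε]
  rw [jacobiTheta₂_eq_tsum_exp_add_sq, hscale, cpow_half_ofReal_mul (by positivity),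
    Real.sqrt_inv, ofReal_inv]
  have hterm (m : ℤ) : -π * I * (m + x) ^ 2 / (I * z ε / ε) = -π * ε * (m + x) ^ 2 / z ε := by
    field_simp
  simp only [hterm]
  field_simp

lemma tendsto_sqrt_mul_tsum_exp_neg_mul_add_sq_div (hz : Tendsto z (𝓝[>] 0) (𝓝 z₀))
    (hz₀ : 0 < z₀.re) {r : ℝ} (hr : 0 < r) (x : ℂ) :
    Tendsto (fun ε : ℝ => √ε * ∑' m : ℤ, cexp (-π * ε * (m * r + x) ^ 2 / z ε)) (𝓝[>] 0)
      (𝓝 (z₀ ^ (1 / 2 : ℂ) / r)) := by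
  have hr' : (r : ℂ) ≠ 0 := ofReal_ne_zero.mpr hr.ne'
  have hscale (w : ℂ) : w / (r : ℂ) ^ 2 = (((r ^ 2)⁻¹ : ℝ) : ℂ) * w := by
    push_cast
    ring
  have hlimit : (z₀ / (r : ℂ) ^ 2) ^ (1 / 2 : ℂ) = z₀ ^ (1 / 2 : ℂ) / r := by
    rw [hscale, cpow_half_ofReal_mul (by positivity), Real.sqrt_inv, Real.sqrt_sq hr.le,
      ofReal_inv, inv_mul_eq_div]
  have hre : 0 < (z₀ / (r : ℂ) ^ 2).re := by
    rw [hscale, re_ofReal_mul]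
    positivity
  rw [← hlimit]
  refine (tendsto_sqrt_mul_tsum_exp_neg_sq_div (hz.div_const _) hre (x / r)).congr fun ε => ?_
  congr 3 with m
  have hshift : (m * r + x : ℂ) = r * (m + x / r) := by field_simp
  rw [hshift]
  congr 1
  field_simp

lemma tendsto_sqrt_mul_tsum_periodic_mul_exp_neg_sq_div (hz : Tendsto z (𝓝[>] 0) (𝓝 z₀))
    (hz₀ : 0 < z₀.re) {c : ℤ → ℂ} {N : ℕ} [NeZero N] (hc : Function.Periodic c N) (x : ℂ) :
    Tendsto (fun ε : ℝ => √ε * ∑' n : ℤ, c n * cexp (-π * ε * (n + x) ^ 2 / z ε)) (𝓝[>] 0)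
      (𝓝 (z₀ ^ (1 / 2 : ℂ) / N * ∑ k ∈ Finset.range N, c k)) := by
  have hN : (0 : ℝ) < N := by exact_mod_cast NeZero.pos N
  rw [Finset.mul_sum]
  refine (tendsto_finsetSum _ fun (k : ℕ) _ => (tendsto_sqrt_mul_tsum_exp_neg_mul_add_sq_div
    hz hz₀ hN (k + x)).mul_const (c k)).congr' ?_
  have hre : ∀ᶠ ε in 𝓝[>] 0, 0 < (z ε).re :=
    ((continuous_re.tendsto z₀).comp hz).eventually_const_lt hz₀
  filter_upwards [self_mem_nhdsWithin, hre] with ε (hε : 0 < ε) hzε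
  have hw : 0 < (ε / z ε).re := by
    rw [div_eq_mul_inv, re_ofReal_mul, inv_re]
    exact mul_pos hε (div_pos hzε (normSq_pos.mpr (ne_of_apply_ne re hzε.ne')))
  have hsum : Summable fun n : ℤ => c n * cexp (-π * ε * (n + x) ^ 2 / z ε) :=
    (summable_periodic_mul hc (summable_exp_neg_mul_add_sq hw x).norm).congr fun n => by ring_nf
  rw [tsum_int_eq_sum_tsum_mul_add hsum N, Finset.mul_sum]
  refine Finset.sum_congr rfl fun k _ => ?_
  rw [mul_assoc, ← tsum_mul_right]
  congr 2 with m
  have hperiod : c (m * N + k) = c k := add_comm (k : ℤ) _ ▸ hc.zsmul m k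
  rw [hperiod, mul_comm]
  push_cast
  ring_nf

end GaussianSums

/-- The summand `exp (πi (an² + bn) / c)` of the generalized quadratic Gauss sum with parameters
`a`, `b`, `c`, as a function of `n : ℤ`. Negative parameters are allowed, so that both sides of the
reciprocity law are sums of this form. -/
noncomputable def gaussSummand (a b c n : ℤ) : ℂ :=
  cexp (π * I * (a * n ^ 2 + b * n) / c)

lemma gaussSummand_periodic {a b c : ℤ} (h : Even (a * c + b)) :
    Function.Periodic (gaussSummand a b c) c := by
  intro n
  rcases eq_or_ne c 0 with rfl | hc
  · rw [add_zero]
  obtain ⟨q, hq⟩ := h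
  have hq' : (a * c + b : ℂ) = q + q := by exact_mod_cast hq
  have hc' : (c : ℂ) ≠ 0 := Int.cast_ne_zero.mpr hc
  refine Complex.exp_eq_exp_iff_exists_int.mpr ⟨a * n + q, ?_⟩
  push_cast
  field_simp
  linear_combination c * hq'

lemma jacobiTheta₂_eq_tsum_gaussSummand_mul_exp (a b c : ℤ) (w : ℂ) :
    jacobiTheta₂ (b / (2 * c)) (a / c + I * w) =
      ∑' n : ℤ, gaussSummand a b c n * cexp (-π * w * n ^ 2) := by
  refine tsum_congr fun n => ?_
  rw [jacobiTheta₂_term, gaussSummand, ← Complex.exp_add]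
  congr 1
  linear_combination (π * n ^ 2 * w) * I_sq

lemma exp_add_sq_div_eq_gaussSummand_mul_exp {a b c : ℤ} (ha : a ≠ 0) (hc : c ≠ 0) {w : ℂ}
    (hτ : (a / c + I * w : ℂ) ≠ 0) (n : ℤ) :
    cexp (-π * I * (n + b / (2 * c)) ^ 2 / (a / c + I * w)) =
      cexp (-(π * I * b ^ 2) / (4 * a * c)) * (gaussSummand (-c) (-b) a n *
        cexp (-π * w * (n + b / (2 * c)) ^ 2 / (a / c * (a / c + I * w)))) := by
  have ha' : (a : ℂ) ≠ 0 := Int.cast_ne_zero.mpr ha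
  have hc' : (c : ℂ) ≠ 0 := Int.cast_ne_zero.mpr hc
  have hτ' : (a + I * c * w : ℂ) ≠ 0 := by
    contrapose! hτ
    field_simp
    linear_combination hτ
  have hinv : -I / (a / c + I * w) = -I * c / a - w / (a / c * (a / c + I * w)) := by
    field_simp
    linear_combination (c * w) * I_sq
  rw [gaussSummand, ← Complex.exp_add, ← Complex.exp_add]
  congr 1
  have hsplit : -π * I * (n + b / (2 * c)) ^ 2 / (a / c + I * w) =
      π * (n + b / (2 * c)) ^ 2 * (-I / (a / c + I * w)) := by ring
  rw [hsplit, hinv]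
  push_cast
  field_simp
  ring

lemma jacobiTheta₂_eq_mul_tsum_gaussSummand_mul_exp {a b c : ℤ} (ha : a ≠ 0) (hc : c ≠ 0) {w : ℂ}
    (hτ : (a / c + I * w : ℂ) ≠ 0) :
    jacobiTheta₂ (b / (2 * c)) (a / c + I * w) =
      1 / (-I * (a / c + I * w)) ^ (1 / 2 : ℂ) * (cexp (-(π * I * b ^ 2) / (4 * a * c)) *
        ∑' n : ℤ, gaussSummand (-c) (-b) a n *
          cexp (-π * w * (n + b / (2 * c)) ^ 2 / (a / c * (a / c + I * w)))) := by
  rw [jacobiTheta₂_eq_tsum_exp_add_sq]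
  simp only [exp_add_sq_div_eq_gaussSummand_mul_exp ha hc hτ, tsum_mul_left]

lemma tendsto_sqrt_mul_jacobiTheta₂_at_rational {a b : ℤ} {c : ℕ} [NeZero c]
    (h : Even (a * c + b)) :
    Tendsto (fun ε : ℝ => √ε * jacobiTheta₂ (b / (2 * c)) (a / c + I * ε)) (𝓝[>] 0)
      (𝓝 (1 / c * ∑ k ∈ Finset.range c, gaussSummand a b c k)) := by
  have hlim := tendsto_sqrt_mul_tsum_periodic_mul_exp_neg_sq_div
    (tendsto_const_nhds (x := (1 : ℂ))) (by simp) (gaussSummand_periodic h) 0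
  rw [one_cpow] at hlim
  refine hlim.congr fun ε => ?_
  have hθ := jacobiTheta₂_eq_tsum_gaussSummand_mul_exp a b c ε
  rw [Int.cast_natCast] at hθ
  simp only [hθ, add_zero, div_one]

lemma tendsto_sqrt_mul_jacobiTheta₂_at_rational_dual {a c : ℕ} [NeZero a] [NeZero c] {b : ℤ}
    (h : Even ((a : ℤ) * c + b)) :
    Tendsto (fun ε : ℝ => √ε * jacobiTheta₂ (b / (2 * c)) (a / c + I * ε)) (𝓝[>] 0)
      (𝓝 (1 / c * (cexp (π * I / 4) * cexp (-(π * I * b ^ 2) / (4 * a * c)) * √(c / a : ℝ) *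
        ∑ k ∈ Finset.range a, gaussSummand (-c) (-b) a k))) := by
  have ha : (a : ℂ) ≠ 0 := NeZero.ne _
  have hc : (c : ℂ) ≠ 0 := NeZero.ne _
  have hac : (0 : ℝ) < a / c :=
    div_pos (by exact_mod_cast NeZero.pos a) (by exact_mod_cast NeZero.pos c)
  let τ : ℝ → ℂ := fun ε => a / c + I * ε
  have hτ : Tendsto τ (𝓝[>] 0) (𝓝 (a / c)) := by
    have hcont : Continuous τ := by fun_prop
    simpa [τ] using (hcont.tendsto 0).mono_left nhdsWithin_le_nhds
  have hfactor : Tendsto (fun ε => 1 / (-I * τ ε) ^ (1 / 2 : ℂ)) (𝓝[>] 0)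
      (𝓝 (cexp (π * I / 4) * √(c / a : ℝ))) := by
    simpa only [inv_div] using tendsto_one_div_cpow_half_neg_I_mul (x := a / c)
      (by push_cast; exact hτ) hac
  have hsq : (a / c * (a / c) : ℂ) = (((a / c) ^ 2 : ℝ) : ℂ) * 1 := by
    push_cast
    ring
  have hroot : (a / c * (a / c) : ℂ) ^ (1 / 2 : ℂ) / a = 1 / c := by
    rw [hsq, cpow_half_ofReal_mul (by positivity), Real.sqrt_sq hac.le, one_cpow]
    push_cast
    field_simp
  have hre : 0 < (a / c * (a / c) : ℂ).re := by
    rw [hsq, mul_one, ofReal_re]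
    positivity
  have hperiodic : Function.Periodic (gaussSummand (-c) (-b) a) a :=
    gaussSummand_periodic (by simpa [mul_comm, add_comm] using h.neg)
  have hsums := tendsto_sqrt_mul_tsum_periodic_mul_exp_neg_sq_div (hτ.const_mul (a / c : ℂ))
    hre hperiodic (b / (2 * c))
  rw [hroot] at hsums
  convert (hfactor.mul (hsums.const_mul
    (cexp (-(π * I * b ^ 2) / (4 * a * c))))).congr' ?_ using 2
  · ring
  filter_upwards [hτ.eventually_ne (div_ne_zero ha hc)] with ε hτε
  have hθ := jacobiTheta₂_eq_mul_tsum_gaussSummand_mul_exp (b := b)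
    (Int.natCast_ne_zero.mpr (NeZero.ne a)) (Int.natCast_ne_zero.mpr (NeZero.ne c)) hτε
  simp only [Int.cast_natCast] at hθ
  rw [hθ]
  ring

/-- Reciprocity for generalized Gauss sums (Siegel's formula): for positive
integers `α, γ` and an integer `β` with `αγ + β` even,
`Σ_{k=0}^{γ-1} exp(πi(αk² + βk)/γ)
  = exp(πi/4) · exp(-πiβ²/(4αγ)) · √(γ/α) · Σ_{k=0}^{α-1} exp(-πi(γk² + βk)/α)`. -/
theorem stmt_10 (α γ : ℕ) (hα : 0 < α) (hγ : 0 < γ) (β : ℤ)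
    (h : Even ((α : ℤ) * γ + β)) :
    ∑ k ∈ Finset.range γ,
        Complex.exp (Real.pi * Complex.I * ((α : ℂ) * (k : ℂ) ^ 2 + (β : ℂ) * k) / γ)
      = Complex.exp (Real.pi * Complex.I / 4)
        * Complex.exp (-(Real.pi * Complex.I * (β : ℂ) ^ 2) / (4 * α * γ))
        * ((Real.sqrt ((γ : ℝ) / α) : ℝ) : ℂ)
        * ∑ k ∈ Finset.range α,
            Complex.exp (-(Real.pi * Complex.I * ((γ : ℂ) * (k : ℂ) ^ 2 + (β : ℂ) * k)) / α) := by
  have : NeZero α := ⟨hα.ne'⟩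
  have : NeZero γ := ⟨hγ.ne'⟩
  have hlimits := tendsto_nhds_unique (tendsto_sqrt_mul_jacobiTheta₂_at_rational h)
    (tendsto_sqrt_mul_jacobiTheta₂_at_rational_dual h)
  have hreciprocity := mul_left_cancel₀ (one_div_ne_zero (NeZero.ne (γ : ℂ))) hlimits
  convert hreciprocity using 3 with k
  · simp [gaussSummand]
  · simp only [gaussSummand]
    push_cast
    ring_nf
end

section
/- Let p be an odd prime and let m, q be positive integers with q coprime to mp. Then the rational number E = 12·s(q,m) − 12p·s(q,mp) is an integer, and exp(2πi(3 − 3p + E)/8) equals the Legendre symbol (q/p), viewed as the complex number 1 or −1. (Equation (5.2), the main arithmetic identity proved in Section 5 of the paper; the integrality of E is the paper's integrality of three times the signature defect of L(m,q) → L(mp,q).) -/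
open Complex Real

/-- The sawtooth function `((x))`: `x - ⌊x⌋ - 1/2` for non-integral `x`,
and `0` for integral `x`. -/
def saw (x : ℚ) : ℚ := if x.den = 1 then 0 else x - ⌊x⌋ - 1 / 2

/-- The Dedekind sum `s(h,k) = Σ_{j=1}^{k-1} ((j/k))·((hj/k))`. -/
def dedekindSum (h k : ℕ) : ℚ :=
  ∑ j ∈ Finset.Icc 1 (k - 1), saw ((j : ℚ) / k) * saw ((h : ℚ) * j / k)

/-!
Write `D(h, k) = 12 k s(h, k)`, an integer for coprime `h`, `k`. Dedekind reciprocity reads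
`h D(h, k) + k D(k, h) = h² + k² + 1 - 3hk`; comparing it with quadratic reciprocity in the form
`2 (h/k) (k/h) ≡ 2 + (h - 1)(k - 1) mod 8` and descending as in the Euclidean algorithm gives
`D(h, k) ≡ k + 1 - 2 (h/k) mod 8` for odd `k`, with the Jacobi symbol `(h/k)`.

Reciprocity for the pairs `(q, m)` and `(q, mp)` expresses `qE` through `D(mp, q)` and `D(m, q)`,
while `mE = D(q, m) - D(q, mp)`; as `q` and `m` are coprime, `E` is an integer. Since `E` depends
only on `q` modulo `mp`, we may take `q` odd, and then the congruences for `D(mp, q)` and `D(m, q)`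
yield `3 - 3p + E ≡ 2 - 2 (q/p) mod 8`. The exponential thus equals `exp(πi(1 - (q/p))/2) = (q/p)`.
-/

section Sawtooth

lemma saw_eq_ite_fract (x : ℚ) :
    saw x = if Int.fract x = 0 then 0 else Int.fract x - 1 / 2 := by
  have den_eq_one_iff : x.den = 1 ↔ Int.fract x = 0 := by
    rw [Int.fract_eq_zero_iff, Rat.den_eq_one_iff]
    exact ⟨fun h ↦ ⟨_, h⟩, by rintro ⟨n, rfl⟩; simp⟩
  simp only [saw, den_eq_one_iff, Int.self_sub_floor]

lemma saw_add_intCast (x : ℚ) (n : ℤ) : saw (x + n) = saw x := by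
  simp only [saw_eq_ite_fract, Int.fract_add_intCast]

lemma saw_neg (x : ℚ) : saw (-x) = -saw x := by
  simp only [saw_eq_ite_fract, Int.fract_neg_eq_zero]
  split_ifs with hx
  · rw [neg_zero]
  · rw [Int.fract_neg hx]
    ring

lemma saw_natCast_div {n k : ℕ} (hk : 0 < k) (hn : ¬k ∣ n) :
    saw (n / k) = ((n % k : ℕ) : ℚ) / k - 1 / 2 := by
  have hmod : n % k ≠ 0 := fun h ↦ hn (Nat.dvd_of_mod_eq_zero h)
  rw [saw_eq_ite_fract, Int.fract_div_natCast_eq_div_natCast_mod, if_neg]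
  positivity

lemma saw_intCast_mul_div_congr {a b : ℤ} {k : ℕ} (hmod : a ≡ b [ZMOD k]) (j : ℕ) :
    saw (a * j / k) = saw (b * j / k) := by
  obtain ⟨t, ht⟩ := hmod.symm.dvd
  have ha : (a : ℚ) = b + k * t := by exact_mod_cast eq_add_of_sub_eq' ht
  rcases k.eq_zero_or_pos with rfl | hk
  · simp [ha]
  · have hshift : (a : ℚ) * j / k = b * j / k + (t * j : ℤ) := by
      rw [ha]
      push_cast
      field_simp
    rw [hshift, saw_add_intCast]

lemma dedekindSum_congr {h h' k : ℕ} (hmod : h ≡ h' [MOD k]) :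
    dedekindSum h k = dedekindSum h' k := by
  refine Finset.sum_congr rfl fun j _ ↦ ?_
  congr 1
  simpa only [Int.cast_natCast] using saw_intCast_mul_div_congr (Int.natCast_modEq_iff.2 hmod) j

lemma dedekindSum_eq_neg {h h' k : ℕ} (hdvd : k ∣ h + h') :
    dedekindSum h k = -dedekindSum h' k := by
  have hmod : (h : ℤ) ≡ -h' [ZMOD k] := by
    refine (Int.modEq_of_dvd ?_).symm
    rw [sub_neg_eq_add]
    exact_mod_cast hdvd
  rw [dedekindSum, dedekindSum, ← Finset.sum_neg_distrib]
  refine Finset.sum_congr rfl fun j _ ↦ ?_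
  have hsaw := saw_intCast_mul_div_congr hmod j
  push_cast at hsaw
  rw [hsaw, neg_mul, neg_div, saw_neg, mul_neg]

end Sawtooth

section FloorSums

lemma two_mul_sum_range_natCast (k : ℕ) : 2 * ∑ j ∈ Finset.range k, (j : ℚ) = k * (k - 1) := by
  induction k with
  | zero => simp
  | succ n ih => rw [Finset.sum_range_succ, mul_add, ih]; push_cast; ring

lemma six_mul_sum_range_natCast_sq (k : ℕ) :
    6 * ∑ j ∈ Finset.range k, (j : ℚ) ^ 2 = k * (k - 1) * (2 * k - 1) := by
  induction k with
  | zero => simp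
  | succ n ih => rw [Finset.sum_range_succ, mul_add, ih]; push_cast; ring

lemma sum_range_mul_mod {M : Type*} [AddCommMonoid M] {h k : ℕ} (hc : h.Coprime k) (f : ℕ → M) :
    ∑ j ∈ Finset.range k, f (h * j % k) = ∑ j ∈ Finset.range k, f j := by
  have hmaps : Set.MapsTo (fun j ↦ h * j % k) (Finset.range k) (Finset.range k) := by
    intro j hj
    simp only [Finset.coe_range, Set.mem_Iio] at hj ⊢
    exact Nat.mod_lt _ (by omega)
  have hinj : Set.InjOn (fun j ↦ h * j % k) (Finset.range k) := by
    intro a ha b hb hab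
    simp only [Finset.coe_range, Set.mem_Iio] at ha hb
    exact (Nat.ModEq.cancel_left_of_coprime hc.symm hab).eq_of_lt_of_lt ha hb
  exact Finset.sum_nbij _ hmaps hinj
    (Finset.surjOn_of_injOn_of_card_le _ hmaps hinj le_rfl) fun _ _ ↦ rfl

lemma natCast_mod_eq_sub (n k : ℕ) : ((n % k : ℕ) : ℚ) = n - k * (n / k : ℕ) := by
  rw [eq_sub_iff_add_eq]
  exact_mod_cast Nat.mod_add_div n k

/-- The floor sum `∑_{j < k} j ⌊hj/k⌋` through which Dedekind sums are evaluated. -/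
def weightedFloorSum (h k : ℕ) : ℕ := ∑ j ∈ Finset.range k, j * (h * j / k)

lemma sum_mul_mod_eq (h k : ℕ) :
    ∑ j ∈ Finset.range k, (j : ℚ) * (h * j % k : ℕ) =
      h * ∑ j ∈ Finset.range k, (j : ℚ) ^ 2 - k * weightedFloorSum h k := by
  rw [weightedFloorSum, Nat.cast_sum, Finset.mul_sum, Finset.mul_sum, ← Finset.sum_sub_distrib]
  refine Finset.sum_congr rfl fun j _ ↦ ?_
  rw [natCast_mod_eq_sub]
  push_cast
  ring

lemma two_mul_sum_floor {h k : ℕ} (hk : 0 < k) (hc : h.Coprime k) :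
    2 * ∑ j ∈ Finset.range k, ((h * j / k : ℕ) : ℚ) = (h - 1) * (k - 1) := by
  have hk0 : (k : ℚ) ≠ 0 := by exact_mod_cast hk.ne'
  have hperm := sum_range_mul_mod hc fun r ↦ (r : ℚ)
  simp only [natCast_mod_eq_sub, Nat.cast_mul, Finset.sum_sub_distrib, ← Finset.mul_sum] at hperm
  refine mul_left_cancel₀ hk0 ?_
  linear_combination (h - 1 : ℚ) * two_mul_sum_range_natCast k - 2 * hperm

lemma sum_floor_sq_eq {h k : ℕ} (hc : h.Coprime k) :
    (k : ℚ) ^ 2 * ∑ j ∈ Finset.range k, ((h * j / k : ℕ) : ℚ) ^ 2 =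
      2 * h * k * weightedFloorSum h k - (h ^ 2 - 1) * ∑ j ∈ Finset.range k, (j : ℚ) ^ 2 := by
  have hperm := sum_range_mul_mod hc fun r ↦ (r : ℚ) ^ 2
  have hexpand (j : ℕ) : ((h * j % k : ℕ) : ℚ) ^ 2 = h ^ 2 * (j : ℚ) ^ 2
      - 2 * h * k * ((j : ℚ) * (h * j / k : ℕ)) + k ^ 2 * ((h * j / k : ℕ) : ℚ) ^ 2 := by
    rw [natCast_mod_eq_sub]
    push_cast
    ring
  simp only [hexpand, Finset.sum_sub_distrib, Finset.sum_add_distrib, ← Finset.mul_sum] at hperm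
  rw [weightedFloorSum]
  push_cast
  linear_combination hperm

lemma sum_range_ite_le_div {h k j : ℕ} (hj : j < k) :
    ∑ i ∈ Finset.range h, (if k * i ≤ h * j then 2 * (i : ℚ) else 0) =
      ((h * j / k : ℕ) : ℚ) ^ 2 + (h * j / k : ℕ) := by
  have hk : 0 < k := by omega
  rcases h.eq_zero_or_pos with rfl | hh
  · simp
  have hlt : h * j / k < h := by
    rw [Nat.div_lt_iff_lt_mul hk]
    exact Nat.mul_lt_mul_of_pos_left hj hh
  have hset : {i ∈ Finset.range h | k * i ≤ h * j} = Finset.range (h * j / k + 1) := by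
    ext i
    rw [Finset.mem_filter, Finset.mem_range, Finset.mem_range, mul_comm k,
      ← Nat.le_div_iff_mul_le hk]
    omega
  rw [← Finset.sum_filter, hset, ← Finset.mul_sum, two_mul_sum_range_natCast]
  push_cast
  ring

lemma card_filter_mul_le {h k i : ℕ} (hc : h.Coprime k) (hi : 0 < i) (hih : i < h) :
    (({j ∈ Finset.range k | k * i ≤ h * j} : Finset ℕ).card : ℚ) = k - 1 - (k * i / h : ℕ) := by
  have hne (j : ℕ) : k * i ≠ h * j := fun heq ↦
    Nat.not_dvd_of_pos_of_lt hi hih (hc.dvd_of_dvd_mul_left ⟨j, heq⟩)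
  have hset : {j ∈ Finset.range k | k * i ≤ h * j} = Finset.Ico (k * i / h + 1) k := by
    ext j
    rw [Finset.mem_filter, Finset.mem_range, Finset.mem_Ico, Nat.succ_le_iff,
      Nat.div_lt_iff_lt_mul (by omega), mul_comm j, (hne j).le_iff_lt, and_comm]
  have hlt : k * i / h + 1 ≤ k := by
    rw [Nat.succ_le_iff, Nat.div_lt_iff_lt_mul (by omega)]
    refine Nat.mul_lt_mul_of_pos_left hih (Nat.pos_of_ne_zero ?_)
    rintro rfl
    exact hne 0 (by simp)
  rw [hset, Nat.card_Ico, Nat.cast_sub hlt]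
  push_cast
  ring

-- Both sides count the lattice points with `0 ≤ i ≤ hj/k` and `0 ≤ j < k`, weighted by `2i`.
lemma sum_floor_sq_add_floor {h k : ℕ} (hc : h.Coprime k) :
    ∑ j ∈ Finset.range k, (((h * j / k : ℕ) : ℚ) ^ 2 + (h * j / k : ℕ)) =
      h * (h - 1) * (k - 1) - 2 * weightedFloorSum k h := by
  have hcolumn {i : ℕ} (hi : i ∈ Finset.range h) :
      ∑ j ∈ Finset.range k, (if k * i ≤ h * j then 2 * (i : ℚ) else 0) =
        (k - 1) * (2 * i) - 2 * (i * (k * i / h : ℕ)) := by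
    rcases i.eq_zero_or_pos with rfl | hpos
    · simp
    rw [← Finset.sum_filter, Finset.sum_const, nsmul_eq_mul,
      card_filter_mul_le hc hpos (Finset.mem_range.1 hi)]
    ring
  rw [← Finset.sum_congr rfl fun j hj ↦ sum_range_ite_le_div (Finset.mem_range.1 hj),
    Finset.sum_comm, Finset.sum_congr rfl fun i ↦ hcolumn, Finset.sum_sub_distrib,
    ← Finset.mul_sum, ← Finset.mul_sum, ← Finset.mul_sum, two_mul_sum_range_natCast,
    weightedFloorSum]
  push_cast
  ring

lemma weightedFloorSum_reciprocity {h k : ℕ} (hk : 0 < k) (hc : h.Coprime k) :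
    12 * ((h : ℚ) * weightedFloorSum h k + k * weightedFloorSum k h) =
      (h - 1) * (k - 1) * (8 * h * k - h - k - 1) := by
  have hk0 : (k : ℚ) ≠ 0 := by exact_mod_cast hk.ne'
  have hcount := sum_floor_sq_add_floor hc
  rw [Finset.sum_add_distrib] at hcount
  refine mul_left_cancel₀ hk0 ?_
  linear_combination 6 * (k : ℚ) ^ 2 * hcount - 6 * sum_floor_sq_eq hc
    - 3 * (k : ℚ) ^ 2 * two_mul_sum_floor hk hc
    + ((h : ℚ) ^ 2 - 1) * six_mul_sum_range_natCast_sq k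

end FloorSums

section Reciprocity

variable {h k : ℕ}

lemma dedekindSum_eq_sum_mul_mod (hk : 0 < k) (hc : h.Coprime k) :
    dedekindSum h k = (∑ j ∈ Finset.range k, (j : ℚ) * (h * j % k : ℕ)) / k ^ 2 - (k - 1) / 4 := by
  have hk0 : (k : ℚ) ≠ 0 := by exact_mod_cast hk.ne'
  have hterm {j : ℕ} (hj : j ∈ Finset.Icc 1 (k - 1)) : saw (j / k) * saw (h * j / k) =
      ((j : ℚ) / k - 1 / 2) * ((h * j % k : ℕ) / k - 1 / 2) := by
    have hj' := Finset.mem_Icc.1 hj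
    have hkj : ¬k ∣ j := Nat.not_dvd_of_pos_of_lt hj'.1 (by omega)
    have hkhj : ¬k ∣ h * j := fun hd ↦ hkj (hc.symm.dvd_of_dvd_mul_left hd)
    rw [← Nat.cast_mul, saw_natCast_div hk hkj, saw_natCast_div hk hkhj,
      Nat.mod_eq_of_lt (by omega : j < k)]
  have hrange : Finset.range k = insert 0 (Finset.Icc 1 (k - 1)) := by
    ext j
    simp only [Finset.mem_range, Finset.mem_insert, Finset.mem_Icc]
    omega
  have hperm := sum_range_mul_mod hc fun r ↦ (r : ℚ)
  calc dedekindSum h k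
      = ∑ j ∈ Finset.range k, ((j : ℚ) / k - 1 / 2) * ((h * j % k : ℕ) / k - 1 / 2) - 1 / 4 := by
        rw [dedekindSum, Finset.sum_congr rfl fun j ↦ hterm, hrange, Finset.sum_insert (by simp)]
        norm_num
    _ = ∑ j ∈ Finset.range k, ((j : ℚ) * (h * j % k : ℕ) / k ^ 2 - (j : ℚ) / (2 * k)
          - ((h * j % k : ℕ) : ℚ) / (2 * k) + 1 / 4) - 1 / 4 := by
        congr 1
        refine Finset.sum_congr rfl fun j _ ↦ ?_
        ring
    _ = _ := by
        simp only [Finset.sum_add_distrib, Finset.sum_sub_distrib, ← Finset.sum_div, hperm,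
          Finset.sum_const, Finset.card_range, nsmul_eq_mul]
        field_simp
        linear_combination (-4 * k : ℚ) * two_mul_sum_range_natCast k

lemma twelve_mul_dedekindSum (hk : 0 < k) (hc : h.Coprime k) :
    12 * k * dedekindSum h k =
      2 * h * (k - 1) * (2 * k - 1) - 12 * weightedFloorSum h k - 3 * k * (k - 1) := by
  have hk0 : (k : ℚ) ≠ 0 := by exact_mod_cast hk.ne'
  rw [dedekindSum_eq_sum_mul_mod hk hc, sum_mul_mod_eq]
  field_simp
  linear_combination 8 * (h : ℚ) * six_mul_sum_range_natCast_sq k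

theorem dedekindSum_reciprocity (hh : 0 < h) (hk : 0 < k) (hc : h.Coprime k) :
    12 * h * k * (dedekindSum h k + dedekindSum k h) = h ^ 2 + k ^ 2 + 1 - 3 * h * k := by
  linear_combination (h : ℚ) * twelve_mul_dedekindSum hk hc
    + k * twelve_mul_dedekindSum hh hc.symm - weightedFloorSum_reciprocity hk hc

/-- The integer `12 k s(h, k)` for coprime `h` and `k` with `0 < k`. Reading it off as a `Rat.num`
lets it inherit the symmetries of `dedekindSum`; by `cast_dedekindNumerator` nothing is lost. -/
def dedekindNumerator (h k : ℕ) : ℤ := (12 * k * dedekindSum h k).num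

lemma cast_dedekindNumerator (hk : 0 < k) (hc : h.Coprime k) :
    (dedekindNumerator h k : ℚ) = 12 * k * dedekindSum h k := by
  have hint : 12 * k * dedekindSum h k = ((2 * h * (k - 1) * (2 * k - 1)
      - 12 * weightedFloorSum h k - 3 * k * (k - 1) : ℤ) : ℚ) := by
    rw [twelve_mul_dedekindSum hk hc]
    push_cast
    rfl
  rw [dedekindNumerator, hint, Rat.num_intCast]

lemma dedekindNumerator_congr {h' : ℕ} (hmod : h ≡ h' [MOD k]) :
    dedekindNumerator h k = dedekindNumerator h' k := by
  rw [dedekindNumerator, dedekindSum_congr hmod, dedekindNumerator]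

lemma dedekindNumerator_eq_neg {h' : ℕ} (hdvd : k ∣ h + h') :
    dedekindNumerator h k = -dedekindNumerator h' k := by
  rw [dedekindNumerator, dedekindSum_eq_neg hdvd, mul_neg, Rat.neg_num, dedekindNumerator]

lemma dedekindNumerator_reciprocity (hh : 0 < h) (hk : 0 < k) (hc : h.Coprime k) :
    h * dedekindNumerator h k + k * dedekindNumerator k h = h ^ 2 + k ^ 2 + 1 - 3 * h * k := by
  rw [← Int.cast_inj (α := ℚ)]
  push_cast
  rw [cast_dedekindNumerator hk hc, cast_dedekindNumerator hh hc.symm]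
  linear_combination dedekindSum_reciprocity hh hk hc

end Reciprocity

section JacobiCongruences

open NumberTheorySymbols

lemma four_dvd_mul_of_even {a b : ℤ} (ha : Even a) (hb : Even b) : 4 ∣ a * b :=
  mul_dvd_mul ha.two_dvd hb.two_dvd

lemma eight_dvd_of_odd_mul {a b : ℤ} (ha : Odd a) (hdvd : 8 ∣ a * b) : 8 ∣ b := by
  have hcop : IsCoprime (2 ^ 3 : ℤ) a := (Int.isCoprime_two_left.2 ha).pow_left
  exact hcop.dvd_of_dvd_mul_left hdvd

lemma odd_jacobiSym {a : ℤ} {k : ℕ} (hc : a.gcd k = 1) : Odd J(a | k) := by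
  rcases jacobiSym.eq_one_or_neg_one hc with h | h <;> rw [h] <;> decide

lemma two_mul_neg_one_pow_modEq (n : ℕ) : 2 * (-1) ^ n ≡ 2 + 4 * n [ZMOD 8] := by
  rcases n.even_or_odd with hn | hn <;> rw [hn.neg_one_pow, Int.ModEq]
  · obtain ⟨c, rfl⟩ := hn
    omega
  · obtain ⟨c, rfl⟩ := hn
    omega

lemma jacobiSym_reciprocity_modEq {h k : ℕ} (hh : Odd h) (hk : Odd k) (hc : h.Coprime k) :
    2 * (J(h | k) * J(k | h)) ≡ 2 + (h - 1) * (k - 1) [ZMOD 8] := by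
  have hsq : J(k | h) ^ 2 = 1 := jacobiSym.sq_one hc.symm
  rw [jacobiSym.quadratic_reciprocity hh hk, mul_assoc, ← sq, hsq, mul_one]
  obtain ⟨s, rfl⟩ := hh
  obtain ⟨t, rfl⟩ := hk
  rw [show (2 * s + 1) / 2 = s by omega, show (2 * t + 1) / 2 = t by omega]
  convert two_mul_neg_one_pow_modEq (s * t) using 1
  push_cast
  ring

lemma chi₄_modEq {k : ℕ} (hk : Odd k) : ZMod.χ₄ k ≡ k [ZMOD 4] := by
  have hk2 := Nat.odd_iff.1 hk
  rw [ZMod.χ₄_nat_eq_if_mod_four, if_neg (by omega), Int.ModEq]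
  split_ifs <;> omega

lemma jacobiSym_eq_chi₄_mul {h h' k : ℕ} (hk : Odd k) (hdvd : k ∣ h + h') :
    J(h' | k) = ZMod.χ₄ k * J(h | k) := by
  rw [← jacobiSym.neg _ hk]
  refine jacobiSym.mod_left' (Int.modEq_iff_dvd.2 ?_)
  rw [show -(h : ℤ) - h' = -((h + h' : ℕ) : ℤ) by push_cast; ring, dvd_neg]
  exact_mod_cast hdvd

lemma dedekindNumerator_modEq_of_swap {h k : ℕ} (hh : Odd h) (hk : Odd k) (hc : h.Coprime k)
    (hswap : dedekindNumerator k h ≡ h + 1 - 2 * J(k | h) [ZMOD 8]) :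
    dedekindNumerator h k ≡ k + 1 - 2 * J(h | k) [ZMOD 8] := by
  have hhZ : Odd (h : ℤ) := by exact_mod_cast hh
  have hkZ : Odd (k : ℤ) := by exact_mod_cast hk
  obtain ⟨a, ha⟩ := Int.eight_dvd_sq_sub_one_of_odd hhZ
  obtain ⟨b, hb⟩ := Int.eight_dvd_sq_sub_one_of_odd hkZ
  obtain ⟨c, hcong⟩ := hswap.dvd
  obtain ⟨d, hd⟩ : (4 : ℤ) ∣ (h + J(k | h)) * (k + J(h | k)) :=
    four_dvd_mul_of_even (hhZ.add_odd (odd_jacobiSym hc.symm)) (hkZ.add_odd (odd_jacobiSym hc))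
  obtain ⟨r, hr⟩ := (jacobiSym_reciprocity_modEq hh hk hc).dvd
  -- Multiplied by `h`, the two sides differ by `2 (h + J(k | h)) (k + J(h | k))` modulo `8`.
  refine (Int.modEq_of_dvd (eight_dvd_of_odd_mul hhZ
    ⟨a + b + r + d - h * k + k * c, ?_⟩)).symm
  linear_combination dedekindNumerator_reciprocity hh.pos hk.pos hc + ha + hb + hr + 2 * hd
    + k * hcong

lemma dedekindNumerator_modEq_of_neg {h h' k : ℕ} (hk : Odd k) (hc : h.Coprime k)
    (hdvd : k ∣ h + h')
    (hneg : dedekindNumerator h' k ≡ k + 1 - 2 * J(h' | k) [ZMOD 8]) :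
    dedekindNumerator h k ≡ k + 1 - 2 * J(h | k) [ZMOD 8] := by
  have hkZ : Odd (k : ℤ) := by exact_mod_cast hk
  have hJ : Odd J(h | k) := odd_jacobiSym hc
  rw [jacobiSym_eq_chi₄_mul hk hdvd] at hneg
  obtain ⟨a, ha⟩ := hneg.dvd
  obtain ⟨b, hb⟩ := (chi₄_modEq hk).dvd
  obtain ⟨d, hd⟩ : (4 : ℤ) ∣ (k + 1) * (J(h | k) - 1) :=
    four_dvd_mul_of_even hkZ.add_one (hJ.sub_odd odd_one)
  refine (Int.modEq_of_dvd ⟨a + d - J(h | k) * b, ?_⟩).symm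
  linear_combination dedekindNumerator_eq_neg hdvd + ha + 2 * hd - 2 * J(h | k) * hb

theorem dedekindNumerator_modEq {k : ℕ} (hk : Odd k) {h : ℕ} (hc : h.Coprime k) :
    dedekindNumerator h k ≡ k + 1 - 2 * J(h | k) [ZMOD 8] := by
  induction k using Nat.strong_induction_on generalizing h with
  | _ k ih =>
  have of_odd_lt {g : ℕ} (hg : Odd g) (hlt : g < k) (hgk : g.Coprime k) :
      dedekindNumerator g k ≡ k + 1 - 2 * J(g | k) [ZMOD 8] :=
    dedekindNumerator_modEq_of_swap hg hk hgk (ih g hlt hg hgk.symm)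
  have hmod : h % k ≡ h [MOD k] := Nat.mod_modEq h k
  have hlt : h % k < k := Nat.mod_lt h hk.pos
  have hgk : (h % k).Coprime k := hmod.gcd_eq.trans hc
  rw [← dedekindNumerator_congr hmod, jacobiSym.mod_left h, ← Int.natCast_mod]
  generalize h % k = g at hlt hgk
  rcases g.even_or_odd with hg | hg
  · rcases g.eq_zero_or_pos with rfl | hpos
    · obtain rfl : k = 1 := by simpa using hgk
      simp [dedekindNumerator, dedekindSum, Int.ModEq]
    · have hdvd : k ∣ g + (k - g) := by simp [hlt.le]
      exact dedekindNumerator_modEq_of_neg hk hgk hdvd <|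
        of_odd_lt (Nat.Odd.sub_even hlt.le hk hg) (by omega)
          ((Nat.coprime_self_sub_left hlt.le).2 hgk)
  · exact of_odd_lt hg hlt hgk

end JacobiCongruences

section Defect

open NumberTheorySymbols

variable {p m q : ℕ}

/-- The quantity `12 s(q, m) - 12 p s(q, mp)`, which is three times the signature defect of the
map of lens spaces `L(m, q) → L(mp, q)`. -/
def dedekindDefect (p m q : ℕ) : ℚ := 12 * dedekindSum q m - 12 * p * dedekindSum q (m * p)

lemma dedekindDefect_congr {q' : ℕ} (hmod : q ≡ q' [MOD m * p]) :
    dedekindDefect p m q = dedekindDefect p m q' := by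
  rw [dedekindDefect, dedekindSum_congr hmod, dedekindSum_congr (hmod.of_mul_right p),
    dedekindDefect]

lemma natCast_mul_dedekindDefect (hp : 0 < p) (hm : 0 < m) (hc : q.Coprime (m * p)) :
    m * dedekindDefect p m q = dedekindNumerator q m - dedekindNumerator q (m * p) := by
  rw [cast_dedekindNumerator hm hc.coprime_mul_right_right,
    cast_dedekindNumerator (Nat.mul_pos hm hp) hc, dedekindDefect]
  push_cast
  ring

lemma dedekindDefect_reciprocity (hp : 0 < p) (hm : 0 < m) (hq : 0 < q)
    (hc : q.Coprime (m * p)) :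
    q * dedekindDefect p m q = p * dedekindNumerator (m * p) q - dedekindNumerator m q
      + m * (1 - p ^ 2) - 3 * q * (1 - p) := by
  have hm0 : (m : ℚ) ≠ 0 := by exact_mod_cast hm.ne'
  have hrec : (q : ℚ) * dedekindNumerator q m + m * dedekindNumerator m q
      = q ^ 2 + m ^ 2 + 1 - 3 * q * m := by
    exact_mod_cast congrArg (Int.cast (R := ℚ))
      (dedekindNumerator_reciprocity hq hm hc.coprime_mul_right_right)
  have hrec' : (q : ℚ) * dedekindNumerator q (m * p) + m * p * dedekindNumerator (m * p) q
      = q ^ 2 + (m * p) ^ 2 + 1 - 3 * q * (m * p) := by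
    exact_mod_cast congrArg (Int.cast (R := ℚ))
      (dedekindNumerator_reciprocity hq (Nat.mul_pos hm hp) hc)
  refine mul_left_cancel₀ hm0 ?_
  linear_combination q * natCast_mul_dedekindDefect hp hm hc + hrec - hrec'

lemma exists_intCast_eq_of_isCoprime {a b u v : ℤ} {x : ℚ} (hab : IsCoprime a b)
    (ha : a * x = u) (hb : b * x = v) : ∃ e : ℤ, (e : ℚ) = x := by
  obtain ⟨s, t, hst⟩ := hab
  have hst' : (s : ℚ) * a + t * b = 1 := by exact_mod_cast hst
  refine ⟨s * u + t * v, ?_⟩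
  push_cast
  linear_combination x * hst' - s * ha - t * hb

lemma exists_intCast_eq_dedekindDefect (hp : 0 < p) (hm : 0 < m) (hq : 0 < q)
    (hc : q.Coprime (m * p)) : ∃ e : ℤ, (e : ℚ) = dedekindDefect p m q :=
  exists_intCast_eq_of_isCoprime
    (Nat.isCoprime_iff_coprime.2 hc.coprime_mul_right_right.symm)
    (by exact_mod_cast natCast_mul_dedekindDefect hp hm hc)
    (by exact_mod_cast dedekindDefect_reciprocity hp hm hq hc)

lemma dedekindDefect_modEq_of_odd {e : ℤ} (hp : Odd p) (hm : 0 < m) (hq : Odd q)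
    (hc : q.Coprime (m * p)) (he : (e : ℚ) = dedekindDefect p m q) :
    3 - 3 * p + e ≡ 2 - 2 * J(q | p) [ZMOD 8] := by
  have hcm : m.Coprime q := hc.coprime_mul_right_right.symm
  have hcp : q.Coprime p := hc.coprime_mul_left_right
  have hpZ : Odd (p : ℤ) := by exact_mod_cast hp
  have hqZ : Odd (q : ℤ) := by exact_mod_cast hq
  have hJm : Odd J(m | q) := odd_jacobiSym hcm
  have hJp : Odd J(p | q) := odd_jacobiSym hcp.symm
  have hJq : Odd J(q | p) := odd_jacobiSym hcp
  have hrec : q * e = p * dedekindNumerator (m * p) q - dedekindNumerator m q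
      + m * (1 - p ^ 2) - 3 * q * (1 - p) := by
    have hrecℚ := dedekindDefect_reciprocity hp.pos hm hq.pos hc
    rw [← he] at hrecℚ
    exact_mod_cast hrecℚ
  obtain ⟨a, ha⟩ := (dedekindNumerator_modEq hq hc.symm).dvd
  rw [Nat.cast_mul, jacobiSym.mul_left] at ha
  obtain ⟨b, hb⟩ := (dedekindNumerator_modEq hq hcm).dvd
  obtain ⟨c, hsq⟩ := Int.eight_dvd_sq_sub_one_of_odd hpZ
  obtain ⟨r, hr⟩ := (jacobiSym_reciprocity_modEq hq hp hcp).dvd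
  obtain ⟨d₁, hd₁⟩ : (4 : ℤ) ∣ (p * J(p | q) - 1) * (J(m | q) - 1) :=
    four_dvd_mul_of_even ((hpZ.mul hJp).sub_odd odd_one) (hJm.sub_odd odd_one)
  obtain ⟨d₂, hd₂⟩ : (4 : ℤ) ∣ (J(q | p) - 1) * (q + J(p | q)) :=
    four_dvd_mul_of_even (hJq.sub_odd odd_one) (hqZ.add_odd hJp)
  obtain ⟨d₃, hd₃⟩ : (4 : ℤ) ∣ (J(p | q) - 1) * (1 - p) :=
    four_dvd_mul_of_even (hJp.sub_odd odd_one) (odd_one.sub_odd hpZ)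
  -- Multiplied by `q`, the two sides differ modulo `8` by twice a signed sum of these products.
  refine (Int.modEq_of_dvd (eight_dvd_of_odd_mul hqZ
    ⟨r + d₂ + d₃ - d₁ - p * a + b - m * c, ?_⟩)).symm
  linear_combination hrec + hr + 2 * hd₂ + 2 * hd₃ - 2 * hd₁ - p * ha + hb - m * hsq

lemma exists_odd_modEq {n : ℕ} (hc : q.Coprime n) : ∃ q', Odd q' ∧ q' ≡ q [MOD n] := by
  rcases q.even_or_odd with hq | hq
  · have hn : Odd n := (hc.coprime_dvd_left hq.two_dvd).odd_of_left
    exact ⟨q + n, hq.add_odd hn, by simp [Nat.ModEq]⟩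
  · exact ⟨q, hq, rfl⟩

theorem exists_intCast_eq_dedekindDefect_and_modEq (hp : Odd p) (hm : 0 < m)
    (hc : q.Coprime (m * p)) :
    ∃ e : ℤ, (e : ℚ) = dedekindDefect p m q ∧ 3 - 3 * p + e ≡ 2 - 2 * J(q | p) [ZMOD 8] := by
  obtain ⟨q', hodd, hmod⟩ := exists_odd_modEq hc
  have hc' : q'.Coprime (m * p) := hmod.gcd_eq.trans hc
  have hJ : J(q' | p) = J(q | p) :=
    jacobiSym.mod_left' (Int.natCast_modEq_iff.2 (hmod.of_mul_left m))
  rw [← dedekindDefect_congr hmod, ← hJ]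
  obtain ⟨e, he⟩ := exists_intCast_eq_dedekindDefect hp.pos hm hodd.pos hc'
  exact ⟨e, he, dedekindDefect_modEq_of_odd hp hm hodd hc' he⟩

end Defect

lemma exp_two_pi_mul_I_mul_div_eight {n J : ℤ} (hJ : J = 1 ∨ J = -1)
    (hn : n ≡ 2 - 2 * J [ZMOD 8]) : Complex.exp (2 * π * I * n / 8) = J := by
  obtain ⟨t, ht⟩ := hn.symm.dvd
  have hn' : (n : ℂ) = 2 - 2 * J + 8 * t := by exact_mod_cast eq_add_of_sub_eq' ht
  have hperiod : 2 * π * I * n / 8 = (1 - J) / 2 * (π * I) + t * (2 * π * I) := by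
    rw [hn']
    ring
  rw [hperiod, Complex.exp_add, Complex.exp_int_mul_two_pi_mul_I, mul_one]
  rcases hJ with rfl | rfl
  · simp
  · norm_num

theorem stmt_12_general (p : ℕ) (hodd : Odd p) (m q : ℕ) (hm : 0 < m)
    (hcop : Nat.Coprime q (m * p)) :
    (∃ e : ℤ, (e : ℚ) = 12 * dedekindSum q m - 12 * p * dedekindSum q (m * p)) ∧
    Complex.exp (2 * Real.pi * Complex.I *
        (3 - 3 * (p : ℂ) +
          ((12 * dedekindSum q m - 12 * p * dedekindSum q (m * p) : ℚ) : ℂ)) / 8)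
      = ((jacobiSym q p : ℤ) : ℂ) := by
  obtain ⟨e, he, hmod⟩ := exists_intCast_eq_dedekindDefect_and_modEq hodd hm hcop
  rw [← dedekindDefect, ← he]
  refine ⟨⟨e, rfl⟩, ?_⟩
  have hJ := jacobiSym.eq_one_or_neg_one (a := q) (b := p) hcop.coprime_mul_left_right
  exact_mod_cast exp_two_pi_mul_I_mul_div_eight hJ hmod

/-- Equation (5.2) of the paper: for an odd prime `p` and positive integers
`m, q` with `q` coprime to `mp`, the rational number
`E = 12·s(q,m) - 12p·s(q,mp)` is an integer, and
`exp(2πi(3 - 3p + E)/8)` equals the Legendre symbol `(q/p)`. -/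
theorem stmt_12 (p : ℕ) [Fact p.Prime] (hodd : Odd p)
    (m q : ℕ) (hm : 0 < m) (hq : 0 < q) (hcop : Nat.Coprime q (m * p)) :
    (∃ e : ℤ, (e : ℚ) = 12 * dedekindSum q m - 12 * p * dedekindSum q (m * p)) ∧
    Complex.exp (2 * Real.pi * Complex.I *
        (3 - 3 * (p : ℂ) +
          ((12 * dedekindSum q m - 12 * p * dedekindSum q (m * p) : ℚ) : ℂ)) / 8)
      = ((legendreSym p q : ℤ) : ℂ) := by
  rw [jacobiSym.legendreSym.to_jacobiSym]
  exact stmt_12_general p hodd m q hm hcop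
end
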